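/- For every integer n ≥ 12, log p(n+1) - log p(n) < log(1 + (√6·π/6)/(n+1)^(1/2)), where p is the partition function. -/

import Mathlib

open PowerSeries PowerSeries.WithPiTopology Finset in
/-- The generating function of partitions into parts at most `m`. -/
theorem mk_card_restricted_le_mul_prod (m : ℕ) :
    (PowerSeries.mk fun n ↦ ((Nat.Partition.restricted n (· ≤ m)).card : ℂ)) *
      ∏ i ∈ range m, (1 - X ^ (i + 1)) = 1 := by
  have h := Nat.Partition.hasProd_powerSeriesMk_card_restricted ℂ (· ≤ m)
  have h' := hasProd_prod_of_ne_finset_one (f := fun i : ℕ ↦ if i + 1 ≤ m then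
    ∑' j : ℕ, (X : ℂ⟦X⟧) ^ ((i + 1) * j) else 1) (s := range m) (L := .unconditional _) (by
      intro b hb
      rw [if_neg]
      simpa [Nat.lt_succ_iff] using hb)
  rw [h.unique h', ← prod_mul_distrib]
  refine prod_eq_one fun i hi ↦ ?_
  rw [if_pos (by simpa [Nat.succ_le_iff] using hi)]
  simp_rw [pow_mul]
  exact tsum_pow_mul_one_sub_of_constantCoeff_eq_zero (by simp)

open PowerSeries PowerSeries.WithPiTopology Finset in
theorem mk_card_partition_mul_pentagonalSeries :
    (PowerSeries.mk fun n ↦ (Fintype.card (Nat.Partition n) : ℤ)) * pentagonalSeries ℤ = 1 := by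
  have h := Nat.Partition.hasProd_powerSeriesMk_card_restricted ℤ (fun _ ↦ True)
  have h2 := h.mul (hasProd_one_sub_X_pow ℤ)
  have h3 : (fun n ↦ (Fintype.card (Nat.Partition n) : ℤ)) =
      fun n ↦ ((Nat.Partition.restricted n (fun _ ↦ True)).card : ℤ) := by
    ext n
    simp [Nat.Partition.restricted]
  rw [h3]
  refine h2.unique ?_
  convert hasProd_one using 2 with i
  simp only [if_true]
  simp_rw [pow_mul]
  exact tsum_pow_mul_one_sub_of_constantCoeff_eq_zero (by simp)

open PowerSeries Finset in
/-- Absolutely convergent power series multiply. -/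
theorem hasSum_coeff_mul {f g : PowerSeries ℂ} {q a b : ℂ}
    (hf : Summable fun n ↦ ‖coeff n f * q ^ n‖) (hfa : HasSum (fun n ↦ coeff n f * q ^ n) a)
    (hg : Summable fun n ↦ ‖coeff n g * q ^ n‖) (hgb : HasSum (fun n ↦ coeff n g * q ^ n) b) :
    (Summable fun n ↦ ‖coeff n (f * g) * q ^ n‖) ∧
      HasSum (fun n ↦ coeff n (f * g) * q ^ n) (a * b) := by
  have key : ∀ n, coeff n (f * g) * q ^ n =
      ∑ kl ∈ antidiagonal n, (coeff kl.1 f * q ^ kl.1) * (coeff kl.2 g * q ^ kl.2) := by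
    intro n
    rw [coeff_mul, sum_mul]
    refine sum_congr rfl fun kl hkl ↦ ?_
    rw [← mem_antidiagonal.mp hkl, pow_add]
    ring
  have h1 := summable_norm_sum_mul_antidiagonal_of_summable_norm hf hg
  simp_rw [key]
  refine ⟨h1, ?_⟩
  rw [← hfa.tsum_eq, ← hgb.tsum_eq, tsum_mul_tsum_eq_tsum_sum_antidiagonal_of_summable_norm hf hg]
  exact h1.of_norm.hasSum

open PowerSeries in
theorem mk_dvd_mul_one_sub_X_pow (k : ℕ) (hk : 0 < k) :
    (PowerSeries.mk fun n ↦ if k ∣ n then (1 : ℂ) else 0) * (1 - X ^ k) = 1 := by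
  ext n
  rw [mul_sub, mul_one, map_sub, coeff_mul_X_pow', coeff_mk, coeff_one]
  by_cases hn : k ≤ n
  · obtain ⟨d, rfl⟩ := Nat.exists_eq_add_of_le hn
    simp [hk.ne']
  · by_cases h0 : n = 0
    · subst h0
      simp [hk.ne']
    · have : ¬ k ∣ n := fun h ↦ hn (Nat.le_of_dvd (by omega) h)
      simp [hn, this, h0]

open PowerSeries in
theorem hasSum_mk_dvd {k : ℕ} (hk : 0 < k) {q : ℂ} (hq : ‖q‖ < 1) :
    (Summable fun n ↦ ‖coeff n (PowerSeries.mk fun n ↦ if k ∣ n then (1 : ℂ) else 0) * q ^ n‖) ∧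
      HasSum (fun n ↦ coeff n (PowerSeries.mk fun n ↦ if k ∣ n then (1 : ℂ) else 0) * q ^ n)
        (1 - q ^ k)⁻¹ := by
  constructor
  · refine Summable.of_nonneg_of_le (fun _ ↦ norm_nonneg _) (fun n ↦ ?_)
      (summable_geometric_of_lt_one (norm_nonneg q) hq)
    rw [coeff_mk]
    split_ifs <;> simp
  · have hinj : Function.Injective fun j : ℕ ↦ k * j := fun a b h ↦ by
      simpa [hk.ne'] using h
    rw [← hinj.hasSum_iff]
    · have hqk : ‖q ^ k‖ < 1 := by
        rw [norm_pow]
        exact pow_lt_one₀ (norm_nonneg _) hq hk.ne'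
      have e : (fun n ↦ coeff n (PowerSeries.mk fun n ↦ if k ∣ n then (1 : ℂ) else 0) * q ^ n) ∘
          (fun j : ℕ ↦ k * j) = fun j ↦ (q ^ k) ^ j := by
        ext j
        simp [pow_mul]
      rw [e]
      exact hasSum_geometric_of_norm_lt_one hqk
    · intro n hn
      have : ¬ k ∣ n := fun ⟨j, hj⟩ ↦ hn ⟨j, hj.symm⟩
      simp [this]

open PowerSeries Finset in
theorem hasSum_card_restricted_le (m : ℕ) {q : ℂ} (hq : ‖q‖ < 1) :
    (Summable fun n ↦ ‖((Nat.Partition.restricted n (· ≤ m)).card : ℂ) * q ^ n‖) ∧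
      HasSum (fun n ↦ ((Nat.Partition.restricted n (· ≤ m)).card : ℂ) * q ^ n)
        (∏ i ∈ range m, (1 - q ^ (i + 1)))⁻¹ := by
  have aux : ∀ m : ℕ,
      (Summable fun n ↦ ‖coeff n
        (∏ i ∈ range m, PowerSeries.mk fun n ↦ if i + 1 ∣ n then (1 : ℂ) else 0) * q ^ n‖) ∧
      HasSum (fun n ↦ coeff n
        (∏ i ∈ range m, PowerSeries.mk fun n ↦ if i + 1 ∣ n then (1 : ℂ) else 0) * q ^ n)
        (∏ i ∈ range m, (1 - q ^ (i + 1)))⁻¹ := by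
    intro m
    induction m with
    | zero =>
      simp only [range_zero, prod_empty, coeff_one, inv_one]
      constructor
      · refine summable_of_ne_finset_zero (s := {0}) fun b hb ↦ ?_
        have : b ≠ 0 := by simpa using hb
        simp [this]
      · convert hasSum_single (f := fun n : ℕ ↦ (if n = 0 then (1 : ℂ) else 0) * q ^ n) 0 ?_ using 1
        · simp
        · intro b hb
          simp [hb]
    | succ m ih =>
      simp_rw [prod_range_succ, mul_inv]
      have h := hasSum_mk_dvd (k := m + 1) m.succ_pos hq
      exact hasSum_coeff_mul ih.1 ih.2 h.1 h.2
  have e : (PowerSeries.mk fun n ↦ ((Nat.Partition.restricted n (· ≤ m)).card : ℂ)) =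
      ∏ i ∈ range m, PowerSeries.mk fun n ↦ if i + 1 ∣ n then (1 : ℂ) else 0 := by
    have h : (∏ i ∈ range m, (1 - X ^ (i + 1) : PowerSeries ℂ)) *
        ∏ i ∈ range m, (PowerSeries.mk fun n ↦ if i + 1 ∣ n then (1 : ℂ) else 0) = 1 := by
      rw [← prod_mul_distrib]
      refine prod_eq_one fun i _ ↦ ?_
      rw [mul_comm]
      exact mk_dvd_mul_one_sub_X_pow (i + 1) i.succ_pos
    exact left_inv_eq_right_inv (mk_card_restricted_le_mul_prod m) h
  have := aux m
  rw [← e] at this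
  simpa only [coeff_mk] using this

theorem card_restricted_le_eq {m n : ℕ} (h : n ≤ m) :
    (Nat.Partition.restricted n (· ≤ m)).card = Fintype.card (Nat.Partition n) := by
  rw [← Finset.card_univ]
  congr 1
  ext x
  simp only [Nat.Partition.restricted, Finset.mem_filter, Finset.mem_univ, true_and, iff_true]
  exact fun i hi ↦ (Nat.Partition.le_of_mem_parts hi).trans h

theorem card_restricted_le_le (m n : ℕ) :
    (Nat.Partition.restricted n (· ≤ m)).card ≤ Fintype.card (Nat.Partition n) :=
  Finset.card_le_univ _

/-- Euler's function `∏ (1 - q ^ k)`. -/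
noncomputable def eulerProd (q : ℂ) : ℂ := ∏' n : ℕ, (1 - q ^ (n + 1))

theorem tendsto_eulerProd {q : ℂ} (hq : ‖q‖ < 1) :
    Filter.Tendsto (fun m ↦ ∏ i ∈ Finset.range m, (1 - q ^ (i + 1))) Filter.atTop
      (nhds (eulerProd q)) :=
  (ModularForm.multipliable_one_sub_pow hq).hasProd.tendsto_prod_nat

theorem eulerProd_ne_zero {q : ℂ} (hq : ‖q‖ < 1) : eulerProd q ≠ 0 := by
  have h := tprod_one_add_ne_zero_of_summable (R := ℂ) (f := fun n ↦ -q ^ (n + 1)) ?_ ?_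
  · simpa [eulerProd, sub_eq_add_neg] using h
  · intro n h
    have h1 : q ^ (n + 1) = 1 := by linear_combination -h
    have h2 : ‖q‖ ^ (n + 1) < 1 := pow_lt_one₀ (norm_nonneg _) hq n.succ_ne_zero
    rw [← norm_pow, h1] at h2
    simp at h2
  · simpa using (summable_nat_add_iff 1).mpr (summable_geometric_of_lt_one (norm_nonneg _) hq)

theorem summable_card_partition {r : ℝ} (hr0 : 0 ≤ r) (hr : r < 1) :
    Summable fun n ↦ (Fintype.card (Nat.Partition n) : ℝ) * r ^ n := by
  have hq : ‖(r : ℂ)‖ < 1 := by simpa [abs_of_nonneg hr0] using hr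
  have hlim := (tendsto_eulerProd hq).inv₀ (eulerProd_ne_zero hq)
  obtain ⟨C, hC⟩ := hlim.norm.bddAbove_range
  refine summable_of_sum_range_le (c := C) (fun n ↦ by positivity) fun m ↦ ?_
  have hs := hasSum_card_restricted_le m hq
  have hs1 : Summable fun n ↦ ((Nat.Partition.restricted n (· ≤ m)).card : ℝ) * r ^ n := by
    simpa [abs_of_nonneg hr0] using hs.1
  have hs2 := hs.2.tsum_eq
  have hs3 : ((∑' n, ((Nat.Partition.restricted n (· ≤ m)).card : ℝ) * r ^ n : ℝ) : ℂ) =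
      (∏ i ∈ Finset.range m, (1 - (r : ℂ) ^ (i + 1)))⁻¹ := by
    rw [← hs2]
    push_cast
    rfl
  calc ∑ n ∈ Finset.range m, (Fintype.card (Nat.Partition n) : ℝ) * r ^ n
      = ∑ n ∈ Finset.range m, ((Nat.Partition.restricted n (· ≤ m)).card : ℝ) * r ^ n := by
        refine Finset.sum_congr rfl fun n hn ↦ ?_
        rw [card_restricted_le_eq (Finset.mem_range.mp hn).le]
    _ ≤ ∑' n, ((Nat.Partition.restricted n (· ≤ m)).card : ℝ) * r ^ n :=
        hs1.sum_le_tsum _ fun n _ ↦ by positivity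
    _ ≤ ‖((∑' n, ((Nat.Partition.restricted n (· ≤ m)).card : ℝ) * r ^ n : ℝ) : ℂ)‖ := by
        rw [Complex.norm_real]
        exact le_abs_self _
    _ ≤ C := by
        rw [hs3]
        exact hC ⟨m, rfl⟩

/-- The generating function of the partition numbers, as an analytic identity. -/
theorem hasSum_card_partition {q : ℂ} (hq : ‖q‖ < 1) :
    HasSum (fun n ↦ (Fintype.card (Nat.Partition n) : ℂ) * q ^ n) (eulerProd q)⁻¹ := by
  have hs := summable_card_partition (norm_nonneg q) hq
  have hs' : Summable fun n ↦ (Fintype.card (Nat.Partition n) : ℂ) * q ^ n :=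
    Summable.of_norm (by simpa using hs)
  have h1 := tendsto_tsum_of_dominated_convergence (𝓕 := Filter.atTop)
    (f := fun (m n : ℕ) ↦ ((Nat.Partition.restricted n (· ≤ m)).card : ℂ) * q ^ n)
    (g := fun n ↦ (Fintype.card (Nat.Partition n) : ℂ) * q ^ n) hs (fun n ↦ ?_) ?_
  · have h2 := (tendsto_eulerProd hq).inv₀ (eulerProd_ne_zero hq)
    have h3 : ∀ m, ∑' n, ((Nat.Partition.restricted n (· ≤ m)).card : ℂ) * q ^ n =
        (∏ i ∈ Finset.range m, (1 - q ^ (i + 1)))⁻¹ :=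
      fun m ↦ (hasSum_card_restricted_le m hq).2.tsum_eq
    simp_rw [h3] at h1
    rw [← tendsto_nhds_unique h1 h2]
    exact hs'.hasSum
  · refine tendsto_const_nhds.congr' ?_
    filter_upwards [Filter.eventually_ge_atTop n] with m hm
    rw [card_restricted_le_eq hm]
  · refine Filter.Eventually.of_forall fun m n ↦ ?_
    rw [norm_mul, norm_pow, Complex.norm_natCast]
    gcongr
    exact card_restricted_le_le m n

open Complex Real in
/-- Cauchy's formula for the partition numbers on the circle of radius `exp (-α)`. -/
theorem card_partition_eq_integral (n : ℕ) {α : ℝ} (hα : 0 < α) :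
    (Fintype.card (Nat.Partition n) : ℂ) = α / (2 * π) *
      ∫ y in (-(π / α))..(π / α), (eulerProd (cexp (-(α * (1 + y * I)))))⁻¹ *
        cexp (n * (α * (1 + y * I))) := by
  have hnorm : ∀ y : ℝ, ‖cexp (-(α * (1 + y * I)))‖ = Real.exp (-α) := by
    intro y
    simp [Complex.norm_exp]
  have hr1 : Real.exp (-α) < 1 := Real.exp_lt_one_iff.mpr (by linarith)
  have hsum := (summable_card_partition (Real.exp_pos (-α)).le hr1)
  have key := intervalIntegral.hasSum_integral_of_dominated_convergence (μ := MeasureTheory.volume)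
    (a := -(π / α)) (b := π / α)
    (F := fun (k : ℕ) (y : ℝ) ↦ (Fintype.card (Nat.Partition k) : ℂ) *
      cexp (-(α * (1 + y * I))) ^ k * cexp (n * (α * (1 + y * I))))
    (f := fun y : ℝ ↦ (eulerProd (cexp (-(α * (1 + y * I)))))⁻¹ * cexp (n * (α * (1 + y * I))))
    (fun k _ ↦ (Fintype.card (Nat.Partition k) : ℝ) * Real.exp (-α) ^ k * Real.exp (n * α))
    (fun k ↦ by
      apply Continuous.aestronglyMeasurable
      fun_prop)
    (fun k ↦ Filter.Eventually.of_forall fun y _ ↦ by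
      rw [norm_mul, norm_mul, norm_pow, hnorm, Complex.norm_exp, Complex.norm_natCast]
      simp)
    (Filter.Eventually.of_forall fun y _ ↦ hsum.mul_right _)
    (by simp)
    (Filter.Eventually.of_forall fun y _ ↦ (hasSum_card_partition (by rw [hnorm]; exact hr1)).mul_right _)
  have hterm : ∀ k : ℕ, ∫ y in (-(π / α))..(π / α), (Fintype.card (Nat.Partition k) : ℂ) *
      cexp (-(α * (1 + y * I))) ^ k * cexp (n * (α * (1 + y * I))) =
      if k = n then (Fintype.card (Nat.Partition n) : ℂ) * (2 * π / α) else 0 := by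
    intro k
    have e : ∀ y : ℝ, (Fintype.card (Nat.Partition k) : ℂ) *
        cexp (-(α * (1 + y * I))) ^ k * cexp (n * (α * (1 + y * I))) =
        (Fintype.card (Nat.Partition k) : ℂ) * cexp ((n - k) * α) *
          cexp ((((n : ℂ) - k) * α * I) * y) := by
      intro y
      rw [← Complex.exp_nat_mul, mul_assoc, mul_assoc, ← Complex.exp_add, ← Complex.exp_add]
      congr 2
      ring
    simp_rw [e]
    rw [intervalIntegral.integral_const_mul]
    split_ifs with hk
    · subst hk
      simp
      ring
    · have hα' : (α : ℂ) ≠ 0 := by exact_mod_cast hα.ne'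
      have hc : ((n : ℂ) - k) * α * I ≠ 0 := by
        refine mul_ne_zero (mul_ne_zero ?_ hα') I_ne_zero
        rw [sub_ne_zero]
        exact_mod_cast Ne.symm hk
      rw [integral_exp_mul_complex hc]
      have : cexp (((n : ℂ) - k) * α * I * ((π / α : ℝ) : ℂ)) =
          cexp (((n : ℂ) - k) * α * I * ((-(π / α) : ℝ) : ℂ)) := by
        rw [Complex.exp_eq_exp_iff_exists_int]
        refine ⟨(n : ℤ) - k, ?_⟩
        push_cast
        field_simp
        ring
      rw [this]
      simp
  simp_rw [hterm] at key
  rw [key.unique (hasSum_ite_eq n _)]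
  have hα' : (α : ℂ) ≠ 0 := by exact_mod_cast hα.ne'
  have hπ : (π : ℂ) ≠ 0 := by exact_mod_cast Real.pi_ne_zero
  field_simp

open Complex Real in
theorem sqrt_I_mul_ofReal_mul {t : ℝ} (ht : 0 < t) {w : ℂ} (hw : 0 < w.re) :
    Complex.sqrt (I * (t * w)) = Complex.sqrt I * (√t * Complex.sqrt w) := by
  have hw0 : w ≠ 0 := fun h ↦ by simp [h] at hw
  have ht0 : (t : ℂ) ≠ 0 := by exact_mod_cast ht.ne'
  have harg := Complex.abs_arg_lt_pi_div_two_iff.mpr (Or.inl hw)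
  rw [abs_lt] at harg
  have hlog : Complex.log (I * (t * w)) = Complex.log I + Complex.log (t * w) := by
    rw [Complex.log_mul_eq_add_log_iff I_ne_zero (mul_ne_zero ht0 hw0),
      Complex.arg_real_mul _ ht, Complex.arg_I]
    constructor <;> linarith [harg.1, harg.2]
  have hs : ((√t : ℝ) : ℂ) = cexp (Real.log t / 2) := by
    rw [Real.sqrt_eq_rpow, Real.rpow_def_of_pos ht]
    push_cast
    ring_nf
  rw [_root_.sqrt_eq_exp (mul_ne_zero I_ne_zero (mul_ne_zero ht0 hw0)),
    _root_.sqrt_eq_exp I_ne_zero, _root_.sqrt_eq_exp hw0, hlog, Complex.log_ofReal_mul ht hw0, hs,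
    ← Complex.exp_add, ← Complex.exp_add]
  congr 1
  ring

open Complex Real in
/-- The modular transformation of the generating function of partitions. -/
theorem eulerProd_inv_exp_neg {α : ℝ} (hα : 0 < α) {w : ℂ} (hw : 0 < w.re) :
    (eulerProd (cexp (-(α * w))))⁻¹ = √(α / (2 * π)) * Complex.sqrt w *
      cexp (π ^ 2 / 6 / (α * w) - α * w / 24) *
        (eulerProd (cexp (-(4 * π ^ 2 / (α * w)))))⁻¹ := by
  have hw0 : w ≠ 0 := fun h ↦ by simp [h] at hw
  have hα' : (α : ℂ) ≠ 0 := by exact_mod_cast hα.ne'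
  have hπ : (π : ℂ) ≠ 0 := by exact_mod_cast Real.pi_ne_zero
  have ht : 0 < α / (2 * π) := by positivity
  set τ : ℂ := I * ((α / (2 * π) : ℝ) * w) with hτ
  have hτim : 0 < τ.im := by
    rw [hτ, Complex.I_mul_im, Complex.re_ofReal_mul]
    positivity
  have h := ModularForm.eta_comp_eq_csqrt_I_inv (x := τ) hτim
  simp only [Function.comp_apply, Pi.smul_apply, Pi.mul_apply, smul_eq_mul] at h
  have e1 : ModularForm.eta τ = cexp (-(α * w / 24)) * eulerProd (cexp (-(α * w))) := by
    rw [ModularForm.eta, eulerProd]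
    congr 1
    · rw [Function.Periodic.qParam]
      congr 1
      rw [hτ]
      push_cast
      field_simp
      rw [I_sq]
    · congr 1
      ext n
      rw [ModularForm.eta_q_eq_pow]
      congr 3
      rw [hτ]
      push_cast
      field_simp
      rw [I_sq]
  have e2 : ModularForm.eta (-1 / τ) = cexp (-(π ^ 2 / 6 / (α * w))) *
      eulerProd (cexp (-(4 * π ^ 2 / (α * w)))) := by
    rw [ModularForm.eta, eulerProd]
    congr 1
    · rw [Function.Periodic.qParam]
      congr 1
      rw [hτ]
      push_cast
      field_simp
      norm_num
    · congr 1
      ext n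
      rw [ModularForm.eta_q_eq_pow]
      congr 3
      rw [hτ]
      push_cast
      field_simp
      norm_num
  have hI : Complex.sqrt I ≠ 0 := by
    rw [_root_.sqrt_eq_exp I_ne_zero]
    exact Complex.exp_ne_zero _
  rw [e1, e2, hτ, sqrt_I_mul_ofReal_mul ht hw] at h
  have hq1 : ‖cexp (-(α * w))‖ < 1 := by
    rw [Complex.norm_exp, Real.exp_lt_one_iff, Complex.neg_re, Complex.re_ofReal_mul]
    have : 0 < α * w.re := by positivity
    linarith
  have hq2 : ‖cexp (-(4 * π ^ 2 / (α * w)))‖ < 1 := by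
    rw [Complex.norm_exp, Real.exp_lt_one_iff, Complex.neg_re]
    have : (4 * (π : ℂ) ^ 2 / (α * w)) = ((4 * π ^ 2 / α : ℝ) : ℂ) * w⁻¹ := by
      push_cast
      field_simp
    rw [this, Complex.re_ofReal_mul, Complex.inv_re]
    have : 0 < 4 * π ^ 2 / α * (w.re / normSq w) := by
      have := Complex.normSq_pos.mpr hw0
      positivity
    linarith
  have hE1 := eulerProd_ne_zero hq1
  have hE2 := eulerProd_ne_zero hq2
  rw [sub_eq_add_neg, Complex.exp_add]
  rw [Complex.exp_neg (π ^ 2 / 6 / (α * w))] at h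
  have h3 := Complex.exp_ne_zero (π ^ 2 / 6 / (α * w))
  have h4 := Complex.exp_neg (α * w / 24)
  generalize cexp (-(α * w / 24)) = u at *
  generalize cexp (π ^ 2 / 6 / (α * w)) = v at *
  generalize eulerProd (cexp (-(α * w))) = E₁ at *
  generalize eulerProd (cexp (-(4 * π ^ 2 / (α * w)))) = E₂ at *
  generalize Complex.sqrt I = i at *
  generalize ((√(α / (2 * π)) : ℝ) : ℂ) * Complex.sqrt w = s at *
  field_simp at h ⊢
  linear_combination h

theorem norm_inv_one_sub_le {w : ℂ} (hw : ‖w‖ < 1) :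
    ‖(1 - w)⁻¹‖ ≤ Real.exp (w.re - ‖w‖) * (1 - ‖w‖)⁻¹ := by
  have h1 := Complex.reCLM.hasSum (Complex.hasSum_taylorSeries_neg_log hw)
  have h1' := h1.add (hasSum_ite_eq (1 : ℕ) (‖w‖ - w.re))
  have h2 := Complex.reCLM.hasSum (Complex.hasSum_taylorSeries_neg_log (z := (‖w‖ : ℂ)) (by simpa))
  have hle := hasSum_le (fun n ↦ ?_) h1' h2
  · have hne : (1 : ℂ) - w ≠ 0 := by
      intro h
      rw [sub_eq_zero] at h
      simp [← h] at hw
    simp only [Complex.reCLM_apply, Complex.neg_re, Complex.log_re] at hle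
    have e : ‖(1 : ℂ) - (‖w‖ : ℂ)‖ = 1 - ‖w‖ := by
      rw [← Complex.ofReal_one, ← Complex.ofReal_sub, Complex.norm_real, Real.norm_eq_abs,
        abs_of_pos (by linarith)]
    rw [e] at hle
    have hp : 0 < ‖1 - w‖ := norm_pos_iff.mpr hne
    have hp2 : 0 < 1 - ‖w‖ := by linarith
    rw [norm_inv, ← Real.exp_log (inv_pos.mpr hp), ← Real.exp_log (inv_pos.mpr hp2), ← Real.exp_add,
      Real.exp_le_exp, Real.log_inv, Real.log_inv]
    linarith
  · simp only [Complex.reCLM_apply]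
    rcases eq_or_ne n 1 with rfl | hn
    · simp
    · rw [if_neg hn, add_zero, ← Complex.ofReal_pow, ← Complex.ofReal_natCast, ← Complex.ofReal_div,
        Complex.ofReal_re, Complex.div_ofReal_re]
      gcongr
      rw [← norm_pow]
      exact Complex.re_le_norm _

/-- Away from the positive real axis the generating function is exponentially smaller. -/
theorem norm_eulerProd_inv_le {q : ℂ} (hq : ‖q‖ < 1) :
    ‖(eulerProd q)⁻¹‖ ≤ Real.exp ((q * (1 - q)⁻¹).re - ‖q‖ * (1 - ‖q‖)⁻¹) *
      ‖(eulerProd (‖q‖ : ℂ))⁻¹‖ := by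
  have hr : ‖(‖q‖ : ℂ)‖ < 1 := by simpa
  have l1 := ((tendsto_eulerProd hq).inv₀ (eulerProd_ne_zero hq)).norm
  have l2 := ((tendsto_eulerProd hr).inv₀ (eulerProd_ne_zero hr)).norm
  have g1 := Complex.reCLM.hasSum ((hasSum_geometric_of_norm_lt_one hq).mul_left q)
  have g2 := (hasSum_geometric_of_lt_one (norm_nonneg q) hq).mul_left ‖q‖
  have g3 := ((Real.continuous_exp.tendsto _).comp (g1.sub g2).tendsto_sum_nat).mul l2
  refine le_of_tendsto_of_tendsto' l1 g3 fun m ↦ ?_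
  simp only [Function.comp_apply]
  rw [← Finset.prod_inv_distrib, ← Finset.prod_inv_distrib, Real.exp_sum, norm_prod, norm_prod,
    ← Finset.prod_mul_distrib]
  refine Finset.prod_le_prod (fun _ _ ↦ norm_nonneg _) fun i _ ↦ ?_
  have hi : ‖q ^ (i + 1)‖ < 1 := by
    rw [norm_pow]
    exact pow_lt_one₀ (norm_nonneg _) hq i.succ_ne_zero
  refine (norm_inv_one_sub_le hi).trans (le_of_eq ?_)
  have e : ‖((1 : ℂ) - (‖q‖ : ℂ) ^ (i + 1))⁻¹‖ = (1 - ‖q ^ (i + 1)‖)⁻¹ := by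
    rw [norm_inv, ← Complex.ofReal_pow, ← Complex.ofReal_one, ← Complex.ofReal_sub,
      Complex.norm_real, Real.norm_eq_abs, ← norm_pow, abs_of_pos (by linarith)]
  rw [e, Complex.reCLM_apply, ← pow_succ', norm_pow, ← pow_succ']

theorem card_partition_le (n : ℕ) : Fintype.card (Nat.Partition n) ≤ 2 ^ (n - 1) :=
  (Fintype.card_le_of_surjective _ (Nat.Partition.ofComposition_surj (n := n))).trans_eq
    (composition_card n)

theorem norm_eulerProd_inv_sub_one_le {q : ℂ} (hq : ‖q‖ ≤ 1 / 4) :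
    ‖(eulerProd q)⁻¹ - 1‖ ≤ 2 * ‖q‖ := by
  have h := hasSum_card_partition (q := q) (by linarith)
  rw [← hasSum_nat_add_iff' 1] at h
  have e : ∑ i ∈ Finset.range 1, (Fintype.card (Nat.Partition i) : ℂ) * q ^ i = 1 := by simp
  rw [e] at h
  have hg := (hasSum_geometric_of_lt_one (r := 2 * ‖q‖) (by positivity) (by linarith)).mul_left ‖q‖
  have h2 := tsum_of_norm_bounded hg (fun n ↦ ?_) (f := fun n ↦ (Fintype.card (Nat.Partition (n + 1)) : ℂ) * q ^ (n + 1))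
  · rw [h.tsum_eq] at h2
    refine h2.trans ?_
    rw [mul_comm]
    gcongr
    rw [inv_le_comm₀ (by linarith) (by norm_num)]
    linarith
  · rw [norm_mul, norm_pow, Complex.norm_natCast, mul_pow, pow_succ']
    have : (Fintype.card (Nat.Partition (n + 1)) : ℝ) ≤ 2 ^ n := by
      exact_mod_cast card_partition_le (n + 1)
    calc _ ≤ 2 ^ n * (‖q‖ * ‖q‖ ^ n) := by gcongr
      _ = _ := by ring

theorem exists_hasDerivAt_exp_sq (r : ℝ) :
    ∃ E : ℂ → ℂ, ∀ z ∈ Metric.ball (0 : ℂ) r, HasDerivAt E (Complex.exp (z ^ 2)) z :=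
  DifferentiableOn.isExactOn_ball (f := fun z ↦ Complex.exp (z ^ 2)) (by fun_prop)

open Complex in
theorem norm_sub_le_of_hasDerivAt_exp_sq {E : ℂ → ℂ} {r : ℝ}
    (hE : ∀ z ∈ Metric.ball (0 : ℂ) r, HasDerivAt E (cexp (z ^ 2)) z) {a b : ℝ}
    (hr : ‖(a + b * I : ℂ)‖ < r) :
    ‖E (a + b * I) - E (b * I)‖ ≤ |a| * Real.exp (a ^ 2 - b ^ 2) := by
  have hd : ∀ t ∈ Set.Icc (0 : ℝ) 1, HasDerivWithinAt (fun t : ℝ ↦ E (t * a + b * I))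
      (cexp ((t * a + b * I) ^ 2) * a) (Set.Icc 0 1) t := by
    intro t ht
    have h1 : HasDerivAt (fun t : ℝ ↦ (t : ℂ) * a + b * I) a t := by
      simpa using (((hasDerivAt_id t).ofReal_comp).mul_const (a : ℂ)).add_const (b * I : ℂ)
    refine ((hE _ ?_).comp t h1).hasDerivWithinAt
    rw [mem_ball_zero_iff]
    refine lt_of_le_of_lt ?_ hr
    rw [← ofReal_mul, norm_add_mul_I, norm_add_mul_I]
    apply Real.sqrt_le_sqrt
    have h2 : t ^ 2 ≤ 1 := by nlinarith [ht.1, ht.2]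
    nlinarith [sq_nonneg a, mul_le_mul_of_nonneg_right h2 (sq_nonneg a)]
  have := norm_image_sub_le_of_norm_deriv_le_segment_01' hd
    (C := |a| * Real.exp (a ^ 2 - b ^ 2)) ?_
  · simpa using this
  · intro t ht
    rw [norm_mul, Complex.norm_exp, norm_real, Real.norm_eq_abs, mul_comm]
    gcongr
    have h2 : t ^ 2 ≤ 1 := by nlinarith [ht.1, ht.2]
    have e : (((t : ℂ) * a + b * I) ^ 2).re = t ^ 2 * a ^ 2 - b ^ 2 := by
      simp [pow_two]
      ring
    rw [e]
    nlinarith [sq_nonneg a, mul_le_mul_of_nonneg_right h2 (sq_nonneg a)]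

open Complex in
theorem sub_eq_integral_of_hasDerivAt_exp_sq {E : ℂ → ℂ} {r : ℝ}
    (hE : ∀ z ∈ Metric.ball (0 : ℂ) r, HasDerivAt E (cexp (z ^ 2)) z) {b : ℝ} (hb : |b| < r) :
    E (b * I) - E (-b * I) = I * (∫ t in (-b)..b, Real.exp (-t ^ 2) : ℝ) := by
  have hd : ∀ t ∈ Set.uIcc (-b) b, HasDerivAt (fun t : ℝ ↦ E (t * I))
      (I * (Real.exp (-t ^ 2) : ℝ)) t := by
    intro t ht
    have h1 : HasDerivAt (fun t : ℝ ↦ (t : ℂ) * I) I t := by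
      simpa using ((hasDerivAt_id t).ofReal_comp).mul_const I
    have h2 := (hE (t * I) ?_).comp t h1
    · have e : I * (Real.exp (-t ^ 2) : ℝ) = cexp ((t * I) ^ 2) * I := by
        rw [mul_pow, I_sq]
        push_cast
        ring_nf
      rw [e]
      exact h2
    · rw [mem_ball_zero_iff, norm_mul, norm_I, mul_one, norm_real, Real.norm_eq_abs]
      refine lt_of_le_of_lt (abs_le.mpr ?_) hb
      rcases le_total 0 b with h | h
      · rw [Set.uIcc_of_le (by linarith)] at ht
        rw [abs_of_nonneg h]
        exact ht
      · rw [Set.uIcc_of_ge (by linarith)] at ht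
        rw [abs_of_nonpos h, neg_neg]
        exact ht
  have := intervalIntegral.integral_eq_sub_of_hasDerivAt hd
    (Continuous.intervalIntegrable (by fun_prop) _ _)
  rw [intervalIntegral.integral_const_mul, intervalIntegral.integral_ofReal] at this
  rw [this]
  push_cast
  rfl

open Complex in
theorem norm_sub_conj_sub_integral_le {E : ℂ → ℂ} {r : ℝ}
    (hE : ∀ z ∈ Metric.ball (0 : ℂ) r, HasDerivAt E (cexp (z ^ 2)) z) {a b : ℝ}
    (hr : ‖(a + b * I : ℂ)‖ < r) :
    ‖E (a + b * I) - E (a - b * I) - I * (∫ t in (-b)..b, Real.exp (-t ^ 2) : ℝ)‖ ≤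
      2 * |a| * Real.exp (a ^ 2 - b ^ 2) := by
  have hb : |b| < r := by
    refine lt_of_le_of_lt ?_ hr
    simpa using abs_im_le_norm (a + b * I : ℂ)
  have h1 := norm_sub_le_of_hasDerivAt_exp_sq hE hr
  have h2 := norm_sub_le_of_hasDerivAt_exp_sq hE (a := a) (b := -b) (by
    rw [norm_add_mul_I] at hr ⊢
    simpa using hr)
  rw [← sub_eq_integral_of_hasDerivAt_exp_sq hE hb]
  have e : E (a + b * I) - E (a - b * I) - (E (b * I) - E (-b * I)) =
      (E (a + b * I) - E (b * I)) - (E (a + (-b : ℝ) * I) - E ((-b : ℝ) * I)) := by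
    push_cast
    rw [neg_mul, ← sub_eq_add_neg]
    ring
  rw [e]
  refine (norm_sub_le _ _).trans ?_
  rw [neg_sq] at h2
  linarith

open MeasureTheory Real in
theorem integral_exp_neg_sq_le (b : ℝ) (hb : 0 ≤ b) :
    ∫ t in (-b)..b, rexp (-t ^ 2) ≤ √π := by
  have h := integral_gaussian 1
  simp only [neg_mul, one_mul, div_one] at h
  have hi := integrable_exp_neg_mul_sq one_pos
  simp only [neg_mul, one_mul] at hi
  rw [← h, intervalIntegral.integral_of_le (by linarith)]
  exact setIntegral_le_integral hi (Filter.Eventually.of_forall fun _ ↦ (exp_pos _).le)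

open MeasureTheory Real in
theorem sqrt_pi_sub_exp_neg_sq_le (b : ℝ) (hb : 1 ≤ b) :
    √π - rexp (-b ^ 2) ≤ ∫ t in (-b)..b, rexp (-t ^ 2) := by
  have h := integral_gaussian_Ioi 1
  have hi := integrable_exp_neg_mul_sq one_pos
  have hm := integrable_mul_exp_neg_mul_sq one_pos
  simp only [neg_mul, one_mul, div_one] at h hi hm
  have h0 : ∫ t in (-b)..b, rexp (-t ^ 2) = 2 * ∫ t in (0)..b, rexp (-t ^ 2) := by
    rw [← intervalIntegral.integral_add_adjacent_intervals (b := 0)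
      (hi.intervalIntegrable) (hi.intervalIntegrable), two_mul]
    congr 1
    have := intervalIntegral.integral_comp_neg (f := fun t ↦ rexp (-t ^ 2)) (a := 0) (b := b)
    simp only [neg_sq, neg_zero] at this
    exact this.symm
  have h1 := intervalIntegral.integral_interval_add_Ioi (a := 0) (b := b) hi.integrableOn
    hi.integrableOn
  have h2 : ∫ t in Set.Ioi b, rexp (-t ^ 2) ≤ ∫ t in Set.Ioi b, t * rexp (-t ^ 2) := by
    refine setIntegral_mono_on hi.integrableOn hm.integrableOn measurableSet_Ioi fun t ht ↦ ?_
    have : 1 ≤ t := hb.trans (le_of_lt ht)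
    nlinarith [exp_pos (-t ^ 2)]
  have h3 : ∫ t in Set.Ioi b, t * rexp (-t ^ 2) = 0 - (-(rexp (-b ^ 2) / 2)) := by
    refine integral_Ioi_of_hasDerivAt_of_tendsto' (f := fun t ↦ -(rexp (-t ^ 2) / 2))
      (fun t _ ↦ ?_) hm.integrableOn ?_
    · have := (((hasDerivAt_pow 2 t).neg).exp.div_const 2).neg
      have e : t * rexp (-t ^ 2) = -(rexp (-t ^ 2) * -((2 : ℕ) * t ^ (2 - 1)) / 2) := by
        simp
        ring
      rw [e]
      exact this
    · have : Filter.Tendsto (fun t : ℝ ↦ rexp (-t ^ 2)) Filter.atTop (nhds 0) :=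
        tendsto_exp_neg_atTop_nhds_zero.comp (Filter.tendsto_pow_atTop two_ne_zero)
      simpa using (this.div_const 2).neg
  rw [h0]
  linarith

open Complex in
theorem sqrt_sq {z : ℂ} (hz : z ≠ 0) : Complex.sqrt z ^ 2 = z := by
  rw [_root_.sqrt_eq_exp hz, ← Complex.exp_nat_mul]
  push_cast
  rw [mul_div_cancel₀ _ two_ne_zero, Complex.exp_log hz]

open Complex in
theorem one_add_mul_I_ne_zero (y : ℝ) : (1 + y * I : ℂ) ≠ 0 := by
  intro h
  simpa using congrArg Complex.re h

open Complex in
theorem sqrt_one_add_mul_I_ne_zero (y : ℝ) : Complex.sqrt (1 + y * I) ≠ 0 := by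
  rw [_root_.sqrt_eq_exp (one_add_mul_I_ne_zero y)]
  exact Complex.exp_ne_zero _

open Complex in
theorem hasDerivAt_sqrt_one_add_mul_I (y : ℝ) :
    HasDerivAt (fun y : ℝ ↦ Complex.sqrt (1 + y * I)) (I / (2 * Complex.sqrt (1 + y * I))) y := by
  have h1 : HasDerivAt (fun y : ℝ ↦ (1 + y * I : ℂ)) I y := by
    simpa using (((hasDerivAt_id y).ofReal_comp).mul_const I).const_add (1 : ℂ)
  have h2 := (Complex.hasDerivAt_sqrt (z := 1 + y * I) (Or.inl (by simp))).comp y h1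
  have e : I / (2 * Complex.sqrt (1 + y * I)) = (1 + y * I : ℂ) ^ (-1 / 2 : ℂ) / 2 * I := by
    rw [show (-1 / 2 : ℂ) = -2⁻¹ by norm_num, Complex.cpow_neg, Complex.sqrt]
    field_simp
  rw [e]
  exact h2

open Complex in
theorem sqrt_one_sub_mul_I (y : ℝ) :
    Complex.sqrt (1 + (-y : ℝ) * I) = starRingEnd ℂ (Complex.sqrt (1 + y * I)) := by
  have h := Complex.conj_cpow (1 + y * I : ℂ) (2⁻¹ : ℂ) (by
    have := Complex.abs_arg_lt_pi_div_two_iff.mpr (Or.inl (show 0 < (1 + y * I : ℂ).re by simp))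
    rw [abs_lt] at this
    linarith [Real.pi_pos])
  have e : starRingEnd ℂ (1 + y * I : ℂ) = 1 + (-y : ℝ) * I := by
    simp
  rw [e] at h
  rw [Complex.sqrt, Complex.sqrt, h]
  congr 2
  simp [map_ofNat]

open Complex in
theorem re_add_inv_one_add_mul_I (y : ℝ) :
    ((1 + y * I : ℂ) + (1 + y * I : ℂ)⁻¹).re = 1 + 1 / (1 + y ^ 2) := by
  simp [Complex.inv_re, Complex.normSq_apply]
  ring

open Complex in
theorem norm_exp_mul_add_inv (x y : ℝ) :
    ‖cexp (x * ((1 + y * I) + (1 + y * I)⁻¹))‖ = Real.exp (x * (1 + 1 / (1 + y ^ 2))) := by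
  rw [Complex.norm_exp, Complex.re_ofReal_mul, re_add_inv_one_add_mul_I]

open Complex in
theorem norm_sqrt_one_add_mul_I_le {y : ℝ} (hy : |y| ≤ 10) : ‖Complex.sqrt (1 + y * I)‖ ≤ 4 := by
  have h := congrArg norm (sqrt_sq (one_add_mul_I_ne_zero y))
  have h2 : ‖(1 + y * I : ℂ)‖ ≤ 16 := by
    refine (norm_add_le _ _).trans ?_
    simp
    linarith
  rw [norm_pow] at h
  nlinarith [norm_nonneg (Complex.sqrt (1 + y * I))]

open Complex in
theorem one_le_norm_sqrt_one_add_mul_I (y : ℝ) : 1 ≤ ‖Complex.sqrt (1 + y * I)‖ := by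
  have h := congrArg norm (sqrt_sq (one_add_mul_I_ne_zero y))
  have h2 : 1 ≤ ‖(1 + y * I : ℂ)‖ := by
    simpa using Complex.abs_re_le_norm (1 + y * I : ℂ)
  rw [norm_pow] at h
  nlinarith [norm_nonneg (Complex.sqrt (1 + y * I))]

theorem mul_sub_inv_sq {K : Type*} [Field K] {s w r x : K} (hs : s ≠ 0) (hw : s ^ 2 = w)
    (hr : r ^ 2 = x) : (r * (s - s⁻¹)) ^ 2 = -(2 * x) + x * (w + w⁻¹) := by
  subst hw hr
  field_simp
  ring

theorem mul_add_inv_sq {K : Type*} [Field K] {s w r x : K} (hs : s ≠ 0) (hw : s ^ 2 = w)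
    (hr : r ^ 2 = x) : (r * (s + s⁻¹)) ^ 2 = 2 * x + x * (w + w⁻¹) := by
  subst hw hr
  field_simp
  ring

open Complex in
theorem hasDerivAt_sqrt_mul_exp_primitive {x r : ℝ} (hx : 0 < x) {E : ℂ → ℂ}
    (hE : ∀ z ∈ Metric.ball (0 : ℂ) r, HasDerivAt E (cexp (z ^ 2)) z) {y : ℝ}
    (h₁ : ‖√x * (Complex.sqrt (1 + y * I) - (Complex.sqrt (1 + y * I))⁻¹)‖ < r)
    (h₂ : ‖√x * (Complex.sqrt (1 + y * I) + (Complex.sqrt (1 + y * I))⁻¹)‖ < r) :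
    HasDerivAt (fun y : ℝ ↦
      Complex.sqrt (1 + y * I) * cexp (x * ((1 + y * I) + (1 + y * I)⁻¹)) * (I * x)⁻¹ +
      (1 - 1 / (2 * x)) * cexp (2 * x) / (I * √x) *
        E (√x * (Complex.sqrt (1 + y * I) - (Complex.sqrt (1 + y * I))⁻¹)) -
      (1 + 1 / (2 * x)) * cexp (-(2 * x)) / (I * √x) *
        E (√x * (Complex.sqrt (1 + y * I) + (Complex.sqrt (1 + y * I))⁻¹)))
      (Complex.sqrt (1 + y * I) * cexp (x * ((1 + y * I) + (1 + y * I)⁻¹))) y := by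
  have hs := hasDerivAt_sqrt_one_add_mul_I y
  have hs0 := sqrt_one_add_mul_I_ne_zero y
  have hw0 := one_add_mul_I_ne_zero y
  have hsq := sqrt_sq hw0
  have hx0 : (x : ℂ) ≠ 0 := by exact_mod_cast hx.ne'
  have hr0 : ((√x : ℝ) : ℂ) ≠ 0 := by exact_mod_cast (Real.sqrt_pos.mpr hx).ne'
  have hrx : ((√x : ℝ) : ℂ) ^ 2 = x := by exact_mod_cast Real.sq_sqrt hx.le
  have hw : HasDerivAt (fun y : ℝ ↦ (1 + y * I : ℂ)) I y := by
    simpa using (((hasDerivAt_id y).ofReal_comp).mul_const I).const_add (1 : ℂ)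
  have hF := ((hw.add (hw.inv hw0)).const_mul (x : ℂ)).cexp
  have hu := ((hE _ (mem_ball_zero_iff.mpr h₁)).comp y
    ((hs.sub (hs.inv hs0)).const_mul ((√x : ℝ) : ℂ)))
  have hv := ((hE _ (mem_ball_zero_iff.mpr h₂)).comp y
    ((hs.add (hs.inv hs0)).const_mul ((√x : ℝ) : ℂ)))
  have key := (((hs.mul hF).mul_const ((I * x)⁻¹)).add
    (hu.const_mul ((1 - 1 / (2 * x)) * cexp (2 * x) / (I * √x)))).sub
    (hv.const_mul ((1 + 1 / (2 * x)) * cexp (-(2 * x)) / (I * √x)))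
  refine key.congr_deriv ?_
  have e1 : cexp ((√x * (Complex.sqrt (1 + y * I) - (Complex.sqrt (1 + y * I))⁻¹)) ^ 2) =
      cexp (-(2 * x)) * cexp (x * ((1 + y * I) + (1 + y * I)⁻¹)) := by
    rw [← Complex.exp_add, mul_sub_inv_sq hs0 hsq hrx]
  have e2 : cexp ((√x * (Complex.sqrt (1 + y * I) + (Complex.sqrt (1 + y * I))⁻¹)) ^ 2) =
      cexp (2 * x) * cexp (x * ((1 + y * I) + (1 + y * I)⁻¹)) := by
    rw [← Complex.exp_add, mul_add_inv_sq hs0 hsq hrx]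
  have e3 : cexp (2 * x) * cexp (-(2 * x)) = 1 := by
    rw [← Complex.exp_add]
    simp
  simp only [Pi.add_apply, Pi.inv_apply, Pi.mul_apply] at *
  rw [e1, e2]
  generalize cexp (x * ((1 + y * I) + (1 + y * I)⁻¹)) = F
  generalize Complex.sqrt (1 + y * I) = s at *
  rw [← hsq]
  have e4 : cexp (-(2 * x)) = (cexp (2 * x))⁻¹ := Complex.exp_neg _
  rw [e4]
  have e5 := Complex.exp_ne_zero (2 * x)
  generalize cexp (2 * x) = g at *
  have hI := I_ne_zero
  field_simp
  ring

open Complex in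
theorem continuous_sqrt_one_add_mul_I : Continuous fun y : ℝ ↦ Complex.sqrt (1 + y * I) :=
  continuous_iff_continuousAt.mpr fun y ↦ (hasDerivAt_sqrt_one_add_mul_I y).continuousAt

open Complex in
theorem continuous_inv_one_add_mul_I : Continuous fun y : ℝ ↦ (1 + y * I : ℂ)⁻¹ :=
  Continuous.inv₀ (by fun_prop) one_add_mul_I_ne_zero

open Complex in
theorem continuous_sqrt_mul_exp (x : ℝ) : Continuous fun y : ℝ ↦
    Complex.sqrt (1 + y * I) * cexp (x * ((1 + y * I) + (1 + y * I)⁻¹)) := by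
  have h1 := continuous_sqrt_one_add_mul_I
  have h2 := continuous_inv_one_add_mul_I
  fun_prop

open Complex in
theorem norm_sub_conj_sub_integral_le_of_norm {E : ℂ → ℂ} {r : ℝ}
    (hE : ∀ z ∈ Metric.ball (0 : ℂ) r, HasDerivAt E (cexp (z ^ 2)) z) {u : ℂ}
    (hr : ‖u‖ < r) :
    ‖E u - E (starRingEnd ℂ u) - I * (∫ t in (-u.im)..u.im, Real.exp (-t ^ 2) : ℝ)‖ ≤
      2 * ‖u‖ * Real.exp ((u ^ 2).re) := by
  have e : starRingEnd ℂ u = u.re - u.im * I := by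
    apply Complex.ext <;> simp
  have h := norm_sub_conj_sub_integral_le hE (a := u.re) (b := u.im) (by rwa [re_add_im])
  rw [← e, re_add_im] at h
  have e2 : (u ^ 2).re = u.re ^ 2 - u.im ^ 2 := by
    simp [pow_two]
  rw [e2]
  refine h.trans ?_
  gcongr
  exact abs_re_le_norm u

open Complex in
theorem im_sqrt_sub_inv_pos {y : ℝ} (hy : 0 < y) :
    0 < (Complex.sqrt (1 + y * I) - (Complex.sqrt (1 + y * I))⁻¹).im := by
  have him : 0 < (Complex.sqrt (1 + y * I)).im := by
    rw [Complex.sqrt, cpow_inv_two_im_eq_sqrt (by simpa using hy.le)]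
    apply Real.sqrt_pos.mpr
    have : (1 + y * I : ℂ).re < ‖(1 + y * I : ℂ)‖ := by
      rw [← ofReal_one, norm_add_mul_I]
      simp
      rw [Real.lt_sqrt (by norm_num)]
      nlinarith
    linarith
  rw [sub_im, inv_im]
  have := Complex.normSq_pos.mpr (sqrt_one_add_mul_I_ne_zero y)
  have h2 : 0 < (Complex.sqrt (1 + y * I)).im / normSq (Complex.sqrt (1 + y * I)) := by positivity
  rw [neg_div]
  linarith

open MeasureTheory Real in
theorem abs_integral_exp_neg_sq_le (b : ℝ) : |∫ t in (-b)..b, rexp (-t ^ 2)| ≤ √π := by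
  rcases le_total 0 b with h | h
  · rw [abs_of_nonneg]
    · exact integral_exp_neg_sq_le b h
    · exact intervalIntegral.integral_nonneg (by linarith) fun _ _ ↦ (exp_pos _).le
  · have := integral_exp_neg_sq_le (-b) (by linarith)
    rw [neg_neg] at this
    rw [intervalIntegral.integral_symm, abs_neg, abs_of_nonneg]
    · exact this
    · exact intervalIntegral.integral_nonneg (by linarith) fun _ _ ↦ (exp_pos _).le

set_option maxHeartbeats 1000000 in
-- a long chain of elementary estimates
open Complex Real in
/-- The Bessel-type integral which gives the main term. -/
theorem norm_integral_sqrt_mul_exp_sub_le {x : ℝ} (hx : 4 ≤ x) :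
    ‖(∫ y : ℝ in (-10)..10, Complex.sqrt (1 + y * I) *
        cexp (x * ((1 + y * I) + (1 + y * I)⁻¹))) -
      (rexp (2 * x) * √(π / x) * (1 - 1 / (2 * x)) : ℝ)‖ ≤ 30 * rexp (x * (102 / 101)) := by
  have hx0 : 0 < x := by linarith
  have hsx : 2 ≤ √x := Real.le_sqrt_of_sq_le (by linarith)
  have hsx2 : √x ^ 2 = x := Real.sq_sqrt hx0.le
  obtain ⟨E, hE⟩ := exists_hasDerivAt_exp_sq (5 * √x + 1)
  have hinv : ∀ y : ℝ, ‖(Complex.sqrt (1 + y * I))⁻¹‖ ≤ 1 := fun y ↦ by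
    rw [norm_inv]
    exact inv_le_one_of_one_le₀ (one_le_norm_sqrt_one_add_mul_I y)
  have hu : ∀ y : ℝ, |y| ≤ 10 →
      ‖√x * (Complex.sqrt (1 + y * I) - (Complex.sqrt (1 + y * I))⁻¹)‖ ≤ 5 * √x := by
    intro y hy
    rw [norm_mul, norm_real, Real.norm_eq_abs, abs_of_nonneg (Real.sqrt_nonneg x), mul_comm]
    gcongr
    linarith [norm_sub_le (Complex.sqrt (1 + y * I)) (Complex.sqrt (1 + y * I))⁻¹, hinv y,
      norm_sqrt_one_add_mul_I_le hy]
  have hv : ∀ y : ℝ, |y| ≤ 10 →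
      ‖√x * (Complex.sqrt (1 + y * I) + (Complex.sqrt (1 + y * I))⁻¹)‖ ≤ 5 * √x := by
    intro y hy
    rw [norm_mul, norm_real, Real.norm_eq_abs, abs_of_nonneg (Real.sqrt_nonneg x), mul_comm]
    gcongr
    linarith [norm_add_le (Complex.sqrt (1 + y * I)) (Complex.sqrt (1 + y * I))⁻¹, hinv y,
      norm_sqrt_one_add_mul_I_le hy]
  have key := intervalIntegral.integral_eq_sub_of_hasDerivAt (a := -10) (b := 10)
    (fun y hy ↦ hasDerivAt_sqrt_mul_exp_primitive hx0 hE (y := y)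
      (lt_of_le_of_lt (hu y (by
        rw [Set.uIcc_of_le (by norm_num)] at hy
        exact abs_le.mpr hy)) (by linarith))
      (lt_of_le_of_lt (hv y (by
        rw [Set.uIcc_of_le (by norm_num)] at hy
        exact abs_le.mpr hy)) (by linarith)))
    ((continuous_sqrt_mul_exp x).intervalIntegrable _ _)
  rw [key]
  have hs1 := norm_sqrt_one_add_mul_I_le (y := 10) (by norm_num)
  have hs2 := norm_sqrt_one_add_mul_I_le (y := -10) (by norm_num)
  have hF1 := norm_exp_mul_add_inv x 10
  have hF2 := norm_exp_mul_add_inv x (-10)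
  have hu10 := hu 10 (by norm_num)
  have hv10 := hv 10 (by norm_num)
  have hbu := norm_sub_conj_sub_integral_le_of_norm hE (lt_of_le_of_lt hu10 (lt_add_one _))
  have hbv := norm_sub_conj_sub_integral_le_of_norm hE (lt_of_le_of_lt hv10 (lt_add_one _))
  have hconj := sqrt_one_sub_mul_I 10
  have hsq := sqrt_sq (one_add_mul_I_ne_zero 10)
  have hs0 := sqrt_one_add_mul_I_ne_zero 10
  have hrx : ((√x : ℝ) : ℂ) ^ 2 = x := by exact_mod_cast hsx2
  have hre := re_add_inv_one_add_mul_I 10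
  have him := im_sqrt_sub_inv_pos (y := 10) (by norm_num)
  rw [mul_sub_inv_sq hs0 hsq hrx, add_re, re_ofReal_mul, hre] at hbu
  rw [mul_add_inv_sq hs0 hsq hrx, add_re, re_ofReal_mul, hre] at hbv
  have hsqu := congrArg Complex.re (mul_sub_inv_sq hs0 hsq hrx)
  rw [add_re, re_ofReal_mul, hre] at hsqu
  have hM : rexp (x * (1 + 1 / (1 + 10 ^ 2))) = rexp (x * (102 / 101)) := by
    norm_num
  have hM2 : rexp (x * (1 + 1 / (1 + (-10) ^ 2))) = rexp (x * (102 / 101)) := by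
    norm_num
  rw [hM] at hF1
  rw [hM2] at hF2
  have hnr : (-(2 * (x : ℂ))).re = -(2 * x) := by simp
  have hpr : (2 * (x : ℂ)).re = 2 * x := by simp
  rw [hnr, Real.exp_add, hM] at hbu
  rw [hpr, Real.exp_add, hM] at hbv
  rw [hnr] at hsqu
  have hUc : ((√x : ℝ) : ℂ) * (Complex.sqrt (1 + (-10 : ℝ) * I) -
      (Complex.sqrt (1 + (-10 : ℝ) * I))⁻¹) =
      starRingEnd ℂ (√x * (Complex.sqrt (1 + (10 : ℝ) * I) -
        (Complex.sqrt (1 + (10 : ℝ) * I))⁻¹)) := by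
    rw [hconj, map_mul, conj_ofReal, map_sub, map_inv₀]
  have hVc : ((√x : ℝ) : ℂ) * (Complex.sqrt (1 + (-10 : ℝ) * I) +
      (Complex.sqrt (1 + (-10 : ℝ) * I))⁻¹) =
      starRingEnd ℂ (√x * (Complex.sqrt (1 + (10 : ℝ) * I) +
        (Complex.sqrt (1 + (10 : ℝ) * I))⁻¹)) := by
    rw [hconj, map_mul, conj_ofReal, map_add, map_inv₀]
  have hUim : 0 < ((√x : ℝ) * (Complex.sqrt (1 + (10 : ℝ) * I) -
      (Complex.sqrt (1 + (10 : ℝ) * I))⁻¹) : ℂ).im := by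
    rw [im_ofReal_mul]
    exact mul_pos (by linarith) him
  rw [hUc, hVc]
  generalize ((√x : ℝ) : ℂ) * (Complex.sqrt (1 + (10 : ℝ) * I) -
      (Complex.sqrt (1 + (10 : ℝ) * I))⁻¹) = U at *
  generalize ((√x : ℝ) : ℂ) * (Complex.sqrt (1 + (10 : ℝ) * I) +
      (Complex.sqrt (1 + (10 : ℝ) * I))⁻¹) = V at *
  generalize Complex.sqrt (1 + (10 : ℝ) * I) = s₁ at *
  generalize Complex.sqrt (1 + (-10 : ℝ) * I) = s₂ at *
  generalize cexp (x * ((1 + (10 : ℝ) * I) + (1 + (10 : ℝ) * I)⁻¹)) = F₁ at *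
  generalize cexp (x * ((1 + (-10 : ℝ) * I) + (1 + (-10 : ℝ) * I)⁻¹)) = F₂ at *
  have hJ1 := abs_integral_exp_neg_sq_le U.im
  have hUim2 : 100 * x / 101 ≤ U.im ^ 2 := by
    have : (U ^ 2).re = U.re ^ 2 - U.im ^ 2 := by simp [pow_two]
    rw [this] at hsqu
    nlinarith [sq_nonneg U.re]
  have hJ2 := sqrt_pi_sub_exp_neg_sq_le U.im (by nlinarith)
  have hJ3 := abs_integral_exp_neg_sq_le V.im
  have hexp : rexp (-U.im ^ 2) ≤ rexp (-(2 * x)) * rexp (x * (102 / 101)) := by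
    rw [← Real.exp_add, Real.exp_le_exp]
    linarith
  have hπ2 : √π ≤ 2 := by
    rw [Real.sqrt_le_left (by norm_num)]
    linarith [Real.pi_lt_four]
  have hPQ : rexp (2 * x) * rexp (-(2 * x)) = 1 := by
    rw [← Real.exp_add]
    simp
  have hM1 : 1 ≤ rexp (x * (102 / 101)) := Real.one_le_exp (by positivity)
  have hQ1 : rexp (-(2 * x)) ≤ 1 := Real.exp_le_one_iff.mpr (by linarith)
  have hP : 0 < rexp (2 * x) := Real.exp_pos _
  have hQ : 0 < rexp (-(2 * x)) := Real.exp_pos _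
  generalize (∫ t in (-U.im)..U.im, rexp (-t ^ 2)) = JU at *
  generalize (∫ t in (-V.im)..V.im, rexp (-t ^ 2)) = JV at *
  generalize rexp (x * (102 / 101)) = M at *
  have hcP : cexp (2 * x) = (rexp (2 * x) : ℝ) := by push_cast; rfl
  have hcQ : cexp (-(2 * x)) = (rexp (-(2 * x)) : ℝ) := by push_cast; rfl
  rw [hcP, hcQ, Real.sqrt_div Real.pi_pos.le]
  generalize rexp (2 * x) = P at *
  generalize rexp (-(2 * x)) = Q at *
  have hr0 : ((√x : ℝ) : ℂ) ≠ 0 := by exact_mod_cast (by linarith : √x ≠ 0)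
  have hx0' : (x : ℂ) ≠ 0 := by exact_mod_cast hx0.ne'
  have hfin : s₁ * F₁ * (I * x)⁻¹ + (1 - 1 / (2 * x)) * P / (I * √x) * E U -
      (1 + 1 / (2 * x)) * Q / (I * √x) * E V -
      (s₂ * F₂ * (I * x)⁻¹ + (1 - 1 / (2 * x)) * P / (I * √x) * E (starRingEnd ℂ U) -
      (1 + 1 / (2 * x)) * Q / (I * √x) * E (starRingEnd ℂ V)) -
      ((P * (√π / √x) * (1 - 1 / (2 * x)) : ℝ) : ℂ) =
      (s₁ * F₁ - s₂ * F₂) * (I * x)⁻¹ +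
      (((1 - 1 / (2 * x)) * P / √x : ℝ) : ℂ) * (I⁻¹ * (E U - E (starRingEnd ℂ U) - I * JU)) +
      (((1 - 1 / (2 * x)) * P / √x * (JU - √π) : ℝ) : ℂ) -
      (((1 + 1 / (2 * x)) * Q / √x : ℝ) : ℂ) * (I⁻¹ * (E V - E (starRingEnd ℂ V) - I * JV)) -
      (((1 + 1 / (2 * x)) * Q / √x * JV : ℝ) : ℂ) := by
    push_cast
    field_simp
    ring
  rw [hfin]
  generalize E U - E (starRingEnd ℂ U) - I * JU = X₁ at *
  generalize E V - E (starRingEnd ℂ V) - I * JV = X₂ at *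
  have hi : 1 / (2 * x) ≤ 1 / 8 := by gcongr; linarith
  have hi0 : 0 < 1 / (2 * x) := by positivity
  have hsx0 : 0 < √x := by linarith
  have b1 : ‖(s₁ * F₁ - s₂ * F₂) * (I * x)⁻¹‖ ≤ 2 * M := by
    rw [norm_mul, norm_inv, norm_mul, norm_I, one_mul, norm_real, Real.norm_eq_abs,
      abs_of_pos hx0, ← div_eq_mul_inv, div_le_iff₀ hx0]
    have h := norm_sub_le (s₁ * F₁) (s₂ * F₂)
    rw [norm_mul, norm_mul, hF1, hF2] at h
    nlinarith
  have hc1 : (1 - 1 / (2 * x)) * P / √x ≤ P / √x := by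
    gcongr
    nlinarith
  have hc10 : 0 ≤ (1 - 1 / (2 * x)) * P / √x := by
    have : 0 ≤ 1 - 1 / (2 * x) := by linarith
    positivity
  have hc2 : (1 + 1 / (2 * x)) * Q / √x ≤ 9 / 8 * Q / √x := by
    gcongr
    linarith
  have hc20 : 0 ≤ (1 + 1 / (2 * x)) * Q / √x := by positivity
  have b2 : ‖(((1 - 1 / (2 * x)) * P / √x : ℝ) : ℂ) * (I⁻¹ * X₁)‖ ≤ 10 * M := by
    rw [norm_mul, norm_mul, norm_inv, norm_I, inv_one, one_mul, norm_real, Real.norm_eq_abs,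
      abs_of_nonneg hc10]
    calc _ ≤ P / √x * (2 * (5 * √x) * (Q * M)) := by
          gcongr
          refine hbu.trans ?_
          gcongr
      _ = 10 * M * (P * Q) := by
          field_simp
          ring
      _ = 10 * M := by rw [hPQ, mul_one]
  have b3 : ‖(((1 - 1 / (2 * x)) * P / √x * (JU - √π) : ℝ) : ℂ)‖ ≤ M := by
    rw [norm_real, Real.norm_eq_abs, abs_mul, abs_of_nonneg hc10]
    calc _ ≤ P / √x * (Q * M) := by
          gcongr
          rw [abs_le] at hJ1 ⊢
          constructor <;> nlinarith [hJ1.2]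
      _ = M / √x * (P * Q) := by
          field_simp
      _ ≤ M := by
          rw [hPQ, mul_one, div_le_iff₀ hsx0]
          nlinarith
  have b4 : ‖(((1 + 1 / (2 * x)) * Q / √x : ℝ) : ℂ) * (I⁻¹ * X₂)‖ ≤ 90 / 8 * M := by
    rw [norm_mul, norm_mul, norm_inv, norm_I, inv_one, one_mul, norm_real, Real.norm_eq_abs,
      abs_of_nonneg hc20]
    calc _ ≤ 9 / 8 * Q / √x * (2 * (5 * √x) * (P * M)) := by
          gcongr
          refine hbv.trans ?_
          gcongr
      _ = 90 / 8 * M * (P * Q) := by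
          field_simp
          ring
      _ = 90 / 8 * M := by rw [hPQ, mul_one]
  have b5 : ‖(((1 + 1 / (2 * x)) * Q / √x * JV : ℝ) : ℂ)‖ ≤ 2 * M := by
    rw [norm_real, Real.norm_eq_abs, abs_mul, abs_of_nonneg hc20]
    calc _ ≤ 9 / 8 * 1 / √x * 2 := by
          gcongr
          all_goals linarith
      _ ≤ 9 / 8 * 1 / 2 * 2 := by gcongr
      _ ≤ 2 * M := by linarith
  refine (norm_sub_le _ _).trans ?_
  refine (add_le_add_left (norm_sub_le _ _) _).trans ?_
  have := norm_add₃_le (a := (s₁ * F₁ - s₂ * F₂) * (I * x)⁻¹)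
    (b := (((1 - 1 / (2 * x)) * P / √x : ℝ) : ℂ) * (I⁻¹ * X₁))
    (c := (((1 - 1 / (2 * x)) * P / √x * (JU - √π) : ℝ) : ℂ))
  linarith

open Complex in
theorem norm_exp_neg_mul_one_add (α y : ℝ) :
    ‖cexp (-(α * (1 + y * I)))‖ = Real.exp (-α) := by
  simp [Complex.norm_exp]

open Complex in
theorem continuous_eulerProd_inv {α : ℝ} (hα : 0 < α) :
    Continuous fun y : ℝ ↦ (eulerProd (cexp (-(α * (1 + y * I)))))⁻¹ := by
  have hr1 : Real.exp (-α) < 1 := Real.exp_lt_one_iff.mpr (by linarith)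
  have e : (fun y : ℝ ↦ (eulerProd (cexp (-(α * (1 + y * I)))))⁻¹) = fun y : ℝ ↦
      ∑' n : ℕ, (Fintype.card (Nat.Partition n) : ℂ) * cexp (-(α * (1 + y * I))) ^ n := by
    ext y
    exact (hasSum_card_partition (by rw [norm_exp_neg_mul_one_add]; exact hr1)).tsum_eq.symm
  rw [e]
  refine continuous_tsum (fun n ↦ by fun_prop) (summable_card_partition (Real.exp_pos (-α)).le hr1)
    fun n y ↦ ?_
  rw [norm_mul, norm_pow, norm_exp_neg_mul_one_add, Complex.norm_natCast]

open Complex in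
theorem le_norm_one_sub_exp {α y : ℝ} (hα : 0 < α) (hy : 10 ≤ |y|) (hy' : |α * y| ≤ Real.pi) :
    32 / 5 * (Real.exp (-α) * α) ≤ ‖1 - cexp (-(α * (1 + y * I)))‖ := by
  have hr : 0 < Real.exp (-α) := Real.exp_pos _
  have hr1 : Real.exp (-α) ≤ 1 := Real.exp_le_one_iff.mpr (by linarith)
  have hr2 : α * Real.exp (-α) ≤ 1 - Real.exp (-α) := by
    have h1 := Real.add_one_le_exp α
    have h2 : Real.exp α * Real.exp (-α) = 1 := by
      rw [← Real.exp_add]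
      simp
    nlinarith
  have hcos := Real.cos_le_one_sub_mul_cos_sq hy'
  have e : ‖1 - cexp (-(α * (1 + y * I)))‖ ^ 2 =
      (1 - Real.exp (-α)) ^ 2 + 2 * Real.exp (-α) * (1 - Real.cos (α * y)) := by
    have e1 : -(α * (1 + y * I) : ℂ) = ((-α : ℝ) : ℂ) + ((-(α * y) : ℝ) : ℂ) * I := by
      push_cast
      ring
    rw [← Complex.normSq_eq_norm_sq, e1, Complex.normSq_apply, Complex.sub_re, Complex.sub_im,
      Complex.exp_re, Complex.exp_im]
    simp only [add_re, ofReal_re, mul_re, I_re, mul_zero, ofReal_im, I_im, mul_one,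
      add_im, mul_im, one_re, one_im, zero_add, add_zero, Real.cos_neg, Real.sin_neg, sub_self]
    nlinarith [Real.sin_sq_add_cos_sq (α * y)]
  refine le_of_sq_le_sq ?_ (norm_nonneg _)
  rw [e]
  have hπ : Real.pi ^ 2 ≤ 10 := by nlinarith [Real.pi_lt_d2, Real.pi_pos]
  have hy2 : 100 * α ^ 2 ≤ (α * y) ^ 2 := by
    have : 10 ^ 2 ≤ |y| ^ 2 := by gcongr
    rw [sq_abs] at this
    nlinarith [sq_nonneg α]
  have h1 : 20 * α ^ 2 ≤ 2 / Real.pi ^ 2 * (α * y) ^ 2 := by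
    calc 20 * α ^ 2 = 2 / 10 * (100 * α ^ 2) := by ring
      _ ≤ _ := by gcongr
  have h2 : (α * Real.exp (-α)) ^ 2 ≤ (1 - Real.exp (-α)) ^ 2 := by gcongr
  have h3 : 2 * Real.exp (-α) * (20 * α ^ 2) ≤
      2 * Real.exp (-α) * (1 - Real.cos (α * y)) := by
    gcongr
    linarith
  have h4 : α ^ 2 * Real.exp (-α) ^ 2 ≤ α ^ 2 * Real.exp (-α) := by
    gcongr
    nlinarith
  nlinarith [sq_nonneg (α * Real.exp (-α))]

open Complex in
theorem norm_eulerProd_inv_exp_le {α y : ℝ} (hα : 0 < α) (hy : 10 ≤ |y|)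
    (hy' : |α * y| ≤ Real.pi) :
    ‖(eulerProd (cexp (-(α * (1 + y * I)))))⁻¹‖ ≤ Real.exp (1 - 27 / 32 / α) *
      ‖(eulerProd (Real.exp (-α) : ℝ))⁻¹‖ := by
  have hr : 0 < Real.exp (-α) := Real.exp_pos _
  have hr1 : Real.exp (-α) < 1 := Real.exp_lt_one_iff.mpr (by linarith)
  have hq := norm_exp_neg_mul_one_add α y
  have h := norm_eulerProd_inv_le (q := cexp (-(α * (1 + y * I)))) (by rwa [hq])
  rw [hq] at h
  refine h.trans (mul_le_mul_of_nonneg_right (Real.exp_le_exp.mpr ?_) (norm_nonneg _))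
  have h1 : (cexp (-(α * (1 + y * I))) * (1 - cexp (-(α * (1 + y * I))))⁻¹).re ≤ 5 / 32 / α := by
    refine (Complex.re_le_norm _).trans ?_
    rw [norm_mul, norm_inv, hq]
    have h2 := le_norm_one_sub_exp hα hy hy'
    rw [← div_eq_mul_inv, div_le_div_iff₀ (lt_of_lt_of_le (by positivity) h2) hα]
    linarith
  have h2 : 1 / α - 1 ≤ Real.exp (-α) * (1 - Real.exp (-α))⁻¹ := by
    have h3 := Real.add_one_le_exp (-α)
    have h4 : α⁻¹ ≤ (1 - Real.exp (-α))⁻¹ := by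
      gcongr
      linarith
    have e : Real.exp (-α) * (1 - Real.exp (-α))⁻¹ = (1 - Real.exp (-α))⁻¹ - 1 := by
      have : 1 - Real.exp (-α) ≠ 0 := by linarith
      field_simp
      ring
    rw [e, one_div]
    linarith
  have e : 27 / 32 / α = 1 / α - 5 / 32 / α := by
    field_simp
    norm_num
  linarith

open Complex Real in
theorem eulerProd_inv_mul_exp_eq {n : ℕ} {x α : ℝ} (hα : 0 < α) (hx : α * x = π ^ 2 / 6)
    (hn : α * (n - 1 / 24) = x) (y : ℝ) :
    (eulerProd (cexp (-(α * (1 + y * I)))))⁻¹ * cexp (n * (α * (1 + y * I))) =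
      √(α / (2 * π)) * (Complex.sqrt (1 + y * I) * cexp (x * ((1 + y * I) + (1 + y * I)⁻¹)) *
        (eulerProd (cexp (-(24 * x * (1 + y * I)⁻¹))))⁻¹) := by
  have hw0 := one_add_mul_I_ne_zero y
  have hα0 : (α : ℂ) ≠ 0 := by exact_mod_cast hα.ne'
  have hx' : (π : ℂ) ^ 2 = 6 * (α * x) := by
    have : π ^ 2 = 6 * (α * x) := by linarith
    exact_mod_cast this
  have hn' : (α : ℂ) * (n - 1 / 24) = x := by
    rw [← hn]
    push_cast
    ring
  rw [eulerProd_inv_exp_neg hα (by simp)]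
  have e1 : 4 * (π : ℂ) ^ 2 / (α * (1 + y * I)) = 24 * x * (1 + y * I)⁻¹ := by
    rw [hx']
    field_simp
    ring
  have e2 : cexp (π ^ 2 / 6 / (α * (1 + y * I)) - α * (1 + y * I) / 24) *
      cexp (n * (α * (1 + y * I))) = cexp (x * ((1 + y * I) + (1 + y * I)⁻¹)) := by
    rw [← Complex.exp_add]
    congr 1
    have e3 : (π : ℂ) ^ 2 / 6 / (α * (1 + y * I)) = x * (1 + y * I)⁻¹ := by
      rw [hx']
      field_simp
    rw [e3]
    linear_combination (1 + y * I) * hn'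
  rw [e1, ← e2]
  ring

open Complex Real in
theorem norm_eulerProd_inv_exp_sub_one_le {x y : ℝ} (hx : 40 ≤ x) (hy : |y| ≤ 10) :
    ‖(eulerProd (cexp (-(24 * x * (1 + y * I)⁻¹))))⁻¹ - 1‖ ≤
      2 * rexp (-(24 * x * (1 / (1 + y ^ 2)))) := by
  have hq : ‖cexp (-(24 * x * (1 + y * I)⁻¹))‖ = rexp (-(24 * x * (1 / (1 + y ^ 2)))) := by
    rw [Complex.norm_exp, neg_re]
    have : (24 * (x : ℂ)) = ((24 * x : ℝ) : ℂ) := by push_cast; rfl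
    rw [this, re_ofReal_mul]
    congr 3
    simp [Complex.inv_re, Complex.normSq_apply]
    ring
  have hy2 : 1 + y ^ 2 ≤ 101 := by nlinarith [sq_abs y, abs_nonneg y]
  have h4 : 24 * 40 * (1 / 101) ≤ 24 * x * (1 / (1 + y ^ 2)) := by gcongr
  rw [← hq]
  refine norm_eulerProd_inv_sub_one_le ?_
  rw [hq, Real.exp_neg, inv_le_comm₀ (Real.exp_pos _) (by norm_num)]
  have := Real.add_one_le_exp (24 * x * (1 / (1 + y ^ 2)))
  norm_num at h4 ⊢
  norm_num at this
  linarith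

open Complex Real in
theorem norm_integral_major_sub_le {x : ℝ} (hx : 40 ≤ x)
    (hc : Continuous fun y : ℝ ↦ Complex.sqrt (1 + y * I) *
      cexp (x * ((1 + y * I) + (1 + y * I)⁻¹)) *
        (eulerProd (cexp (-(24 * x * (1 + y * I)⁻¹))))⁻¹) :
    ‖(∫ y : ℝ in (-10)..10, Complex.sqrt (1 + y * I) *
        cexp (x * ((1 + y * I) + (1 + y * I)⁻¹)) *
        (eulerProd (cexp (-(24 * x * (1 + y * I)⁻¹))))⁻¹) -
      (rexp (2 * x) * √(π / x) * (1 - 1 / (2 * x)) : ℝ)‖ ≤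
        30 * rexp (x * (102 / 101)) + 160 * rexp x := by
  have h1 := norm_integral_sqrt_mul_exp_sub_le (x := x) (by linarith)
  have h2 : ‖∫ y : ℝ in (-10)..10, (Complex.sqrt (1 + y * I) *
        cexp (x * ((1 + y * I) + (1 + y * I)⁻¹)) *
        (eulerProd (cexp (-(24 * x * (1 + y * I)⁻¹))))⁻¹ -
        Complex.sqrt (1 + y * I) * cexp (x * ((1 + y * I) + (1 + y * I)⁻¹)))‖ ≤
        8 * rexp x * |10 - (-10)| := by
    refine intervalIntegral.norm_integral_le_of_norm_le_const fun y hy ↦ ?_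
    rw [Set.uIoc_of_le (by norm_num)] at hy
    have hy' : |y| ≤ 10 := abs_le.mpr ⟨hy.1.le, hy.2⟩
    rw [← mul_sub_one, norm_mul, norm_mul, norm_exp_mul_add_inv]
    calc _ ≤ 4 * rexp (x * (1 + 1 / (1 + y ^ 2))) *
          (2 * rexp (-(24 * x * (1 / (1 + y ^ 2))))) := by
          gcongr
          · exact norm_sqrt_one_add_mul_I_le hy'
          · exact norm_eulerProd_inv_exp_sub_one_le hx hy'
      _ = 8 * rexp (x * (1 + 1 / (1 + y ^ 2)) + -(24 * x * (1 / (1 + y ^ 2)))) := by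
          rw [Real.exp_add]
          ring
      _ ≤ 8 * rexp x := by
          gcongr
          have : 0 ≤ x * (1 / (1 + y ^ 2)) := by positivity
          linarith
  rw [intervalIntegral.integral_sub (hc.intervalIntegrable _ _)
    ((continuous_sqrt_mul_exp x).intervalIntegrable _ _)] at h2
  have h3 := norm_add_le_of_le h2 h1
  rw [sub_add_sub_cancel] at h3
  refine h3.trans ?_
  norm_num
  linarith

open Complex Real in
theorem norm_eulerProd_inv_mul_exp_le {n : ℕ} {x α : ℝ} (hα : 0 < α) (hx40 : 40 ≤ x)
    (hx : α * x = π ^ 2 / 6) (hn : α * (n - 1 / 24) = x) {y : ℝ} (hy : 10 ≤ |y|)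
    (hy' : |α * y| ≤ π) :
    ‖(eulerProd (cexp (-(α * (1 + y * I)))))⁻¹ * cexp (n * (α * (1 + y * I)))‖ ≤
      √(α / (2 * π)) * (9 / 2 * rexp (3 / 2 * x)) := by
  have h0 := eulerProd_inv_mul_exp_eq hα hx hn 0
  have h1 := norm_eulerProd_inv_exp_sub_one_le hx40 (y := 0) (by norm_num)
  have h2 := norm_eulerProd_inv_exp_le hα hy hy'
  simp only [ofReal_zero, zero_mul, add_zero, mul_one, inv_one, Complex.sqrt_one, one_mul] at h0 h1
  have e : ((rexp (-α) : ℝ) : ℂ) = cexp (-α) := by push_cast; rfl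
  have hR : ‖cexp (n * (α * (1 + y * I)))‖ = ‖cexp (n * α)‖ := by
    simp [Complex.norm_exp]
  have hP2 : ‖(eulerProd (cexp (-(24 * x))))⁻¹‖ ≤ 3 / 2 := by
    have h3 := norm_add_le ((eulerProd (cexp (-(24 * x))))⁻¹ - 1) 1
    rw [sub_add_cancel, norm_one] at h3
    have : 2 * rexp (-(24 * x * (1 / (1 + 0 ^ 2)))) ≤ 1 / 2 := by
      rw [Real.exp_neg]
      have h4 := Real.add_one_le_exp (24 * x * (1 / (1 + 0 ^ 2)))
      have h5 : (rexp (24 * x * (1 / (1 + 0 ^ 2))))⁻¹ ≤ (4 : ℝ)⁻¹ := by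
        gcongr
        norm_num at h4 ⊢
        linarith
      linarith
    linarith
  have hα2 : 1 - 27 / 32 / α ≤ 1 - x / 2 := by
    have : x / 2 ≤ 27 / 32 / α := by
      rw [le_div_iff₀ hα]
      nlinarith [Real.pi_lt_d2, Real.pi_pos]
    linarith
  rw [e] at h2
  have hsq : 0 ≤ √(α / (2 * π)) := Real.sqrt_nonneg _
  calc _ ≤ rexp (1 - 27 / 32 / α) * ‖(eulerProd (cexp (-α)))⁻¹‖ * ‖cexp (n * α)‖ := by
        rw [norm_mul, hR]
        gcongr
    _ = rexp (1 - 27 / 32 / α) * (√(α / (2 * π)) * (rexp (2 * x) *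
          ‖(eulerProd (cexp (-(24 * x))))⁻¹‖)) := by
        rw [mul_assoc, ← norm_mul, h0, norm_mul, norm_mul, norm_real, Real.norm_eq_abs,
          abs_of_nonneg hsq]
        have : ‖cexp (x * (1 + 1))‖ = rexp (2 * x) := by
          rw [Complex.norm_exp]
          congr 1
          simp
          ring
        rw [this]
    _ ≤ rexp (1 - x / 2) * (√(α / (2 * π)) * (rexp (2 * x) * (3 / 2))) := by
        gcongr
    _ = √(α / (2 * π)) * (3 / 2 * (rexp 1 * rexp (3 / 2 * x))) := by
        rw [← Real.exp_add, show 1 + 3 / 2 * x = (1 - x / 2) + 2 * x by ring, Real.exp_add]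
        ring
    _ ≤ √(α / (2 * π)) * (3 / 2 * (3 * rexp (3 / 2 * x))) := by
        gcongr
        exact Real.exp_one_lt_three.le
    _ = _ := by ring

open Real in
theorem mul_pow_four_le_exp {x : ℝ} (hx : 40 ≤ x) : 40 * x ^ 4 ≤ rexp (x / 2) := by
  have h5 : 140 ≤ rexp 5 := by
    have h1 : rexp 5 = rexp 1 ^ 5 := by
      rw [← Real.exp_nat_mul]
      norm_num
    rw [h1]
    have h2 : (2.7 : ℝ) ≤ rexp 1 := by linarith [Real.exp_one_gt_d9]
    calc (140 : ℝ) ≤ 2.7 ^ 5 := by norm_num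
      _ ≤ _ := by gcongr
  have h8 : 2.6 * x ≤ rexp (x / 8) := by
    have e : rexp (x / 8) = rexp 5 * rexp (x / 8 - 5) := by
      rw [← Real.exp_add]
      ring_nf
    have h3 := Real.add_one_le_exp (x / 8 - 5)
    rw [e]
    nlinarith
  have e : rexp (x / 2) = rexp (x / 8) ^ 4 := by
    rw [← Real.exp_nat_mul]
    ring_nf
  rw [e]
  calc 40 * x ^ 4 ≤ (2.6 * x) ^ 4 := by nlinarith [pow_nonneg (by linarith : 0 ≤ x) 4]
    _ ≤ _ := by gcongr

open Real in
theorem error_terms_le {x : ℝ} (hx : 40 ≤ x) :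
    30 * rexp (x * (102 / 101)) + 160 * rexp x + 18 * x * rexp (3 / 2 * x) ≤
      1 / (20 * x ^ 2) * (rexp (2 * x) * √(π / x) * (1 - 1 / (2 * x))) := by
  have hx0 : 0 < x := by linarith
  have h1 : rexp (x * (102 / 101)) * 5 ≤ rexp (3 / 2 * x) := by
    have e : rexp (3 / 2 * x) = rexp (x * (102 / 101)) * rexp (99 / 202 * x) := by
      rw [← Real.exp_add]
      ring_nf
    rw [e]
    gcongr
    linarith [Real.add_one_le_exp (99 / 202 * x)]
  have h2 : rexp x ≤ rexp (x * (102 / 101)) := by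
    gcongr
    linarith
  have h3 := mul_pow_four_le_exp hx
  have e2 : rexp (2 * x) = rexp (3 / 2 * x) * rexp (x / 2) := by
    rw [← Real.exp_add]
    ring_nf
  have hs : 6 ≤ √x := Real.le_sqrt_of_sq_le (by linarith)
  have hs2 : √x ^ 2 = x := Real.sq_sqrt hx0.le
  have hπ : 1.7 ≤ √π := Real.le_sqrt_of_sq_le (by linarith [Real.pi_gt_three])
  have h4 : 1 / (2 * x) ≤ 0.02 := by
    rw [div_le_iff₀ (by positivity)]
    linarith
  have hE : 0 < rexp (3 / 2 * x) := Real.exp_pos _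
  calc _ ≤ 19 * x * rexp (3 / 2 * x) := by nlinarith
    _ ≤ 1 / (20 * x ^ 2) * (rexp (3 / 2 * x) * (40 * x ^ 4) * (1.7 / √x) * 0.98) := by
        have hsp : 0 < √x := by linarith
        have e3 : 1 / (20 * x ^ 2) * (rexp (3 / 2 * x) * (40 * x ^ 4) * (1.7 / √x) * 0.98) =
            x * rexp (3 / 2 * x) * (2 * 1.7 * 0.98 * √x) := by
          have : x / √x = √x := by
            rw [div_eq_iff hsp.ne', ← pow_two, hs2]
          rw [← this]
          field_simp
          rw [hs2]
          ring
        rw [e3]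
        have : 0 < x * rexp (3 / 2 * x) := by positivity
        nlinarith
    _ ≤ _ := by
        rw [e2, Real.sqrt_div Real.pi_pos.le]
        gcongr
        linarith

open Complex Real in
theorem norm_card_partition_sub_le {n : ℕ} {x α : ℝ} (hα : 0 < α) (hx40 : 40 ≤ x)
    (hx : α * x = π ^ 2 / 6) (hn : α * (n - 1 / 24) = x) :
    |(Fintype.card (Nat.Partition n) : ℝ) - α / (2 * π) * (√(α / (2 * π)) *
      (rexp (2 * x) * √(π / x) * (1 - 1 / (2 * x))))| ≤ α / (2 * π) * (√(α / (2 * π)) *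
      (30 * rexp (x * (102 / 101)) + 160 * rexp x + 18 * x * rexp (3 / 2 * x))) := by
  have hx0 : 0 < x := by linarith
  have hT : π / α = 6 / π * x := by
    rw [div_eq_iff hα.ne']
    field_simp
    linarith
  have hT10 : 10 ≤ π / α := by
    rw [hT]
    have : 6 / π * x = 6 * x / π := by ring
    rw [this, le_div_iff₀ Real.pi_pos]
    nlinarith [Real.pi_lt_four]
  have hTx : 9 * (π / α) ≤ 18 * x := by
    rw [hT]
    have : 6 / π ≤ 2 := by
      rw [div_le_iff₀ Real.pi_pos]
      linarith [Real.pi_gt_three]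
    nlinarith
  have hsq0 : 0 < √(α / (2 * π)) := Real.sqrt_pos.mpr (by positivity)
  set f : ℝ → ℂ := fun y ↦ (eulerProd (cexp (-(α * (1 + y * I)))))⁻¹ *
    cexp (n * (α * (1 + y * I))) with hf
  have hfc : Continuous f := (continuous_eulerProd_inv hα).mul (by fun_prop)
  have hfe : f = fun y : ℝ ↦ ((√(α / (2 * π)) : ℝ) : ℂ) * (Complex.sqrt (1 + y * I) *
      cexp (x * ((1 + y * I) + (1 + y * I)⁻¹)) *
        (eulerProd (cexp (-(24 * x * (1 + y * I)⁻¹))))⁻¹) :=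
    funext fun y ↦ eulerProd_inv_mul_exp_eq hα hx hn y
  have hcard := card_partition_eq_integral n hα
  rw [← hf, ← intervalIntegral.integral_add_adjacent_intervals (b := 10)
    (hfc.intervalIntegrable _ _) (hfc.intervalIntegrable _ _),
    ← intervalIntegral.integral_add_adjacent_intervals (a := -(π / α)) (b := -10) (c := 10)
    (hfc.intervalIntegrable _ _) (hfc.intervalIntegrable _ _)] at hcard
  have hle : ‖∫ y in (-(π / α))..(-10), f y‖ ≤
      √(α / (2 * π)) * (9 / 2 * rexp (3 / 2 * x)) * |-10 - -(π / α)| := by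
    refine intervalIntegral.norm_integral_le_of_norm_le_const fun y hy ↦ ?_
    rw [Set.uIoc_of_le (by linarith)] at hy
    have hya : |y| = -y := abs_of_neg (by linarith [hy.2])
    refine norm_eulerProd_inv_mul_exp_le hα hx40 hx hn (by linarith [hy.2]) ?_
    rw [abs_mul, abs_of_pos hα, hya, ← le_div_iff₀' hα]
    linarith [hy.1]
  have hri : ‖∫ y in (10)..(π / α), f y‖ ≤
      √(α / (2 * π)) * (9 / 2 * rexp (3 / 2 * x)) * |π / α - 10| := by
    refine intervalIntegral.norm_integral_le_of_norm_le_const fun y hy ↦ ?_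
    rw [Set.uIoc_of_le (by linarith)] at hy
    have hya : |y| = y := abs_of_pos (by linarith [hy.1])
    refine norm_eulerProd_inv_mul_exp_le hα hx40 hx hn (by linarith [hy.1]) ?_
    rw [abs_mul, abs_of_pos hα, hya, ← le_div_iff₀' hα]
    exact hy.2
  have hmid := norm_integral_major_sub_le hx40 (by
    have hsc : ((√(α / (2 * π)) : ℝ) : ℂ) ≠ 0 := by exact_mod_cast hsq0.ne'
    have := hfc.const_mul ((√(α / (2 * π)) : ℝ) : ℂ)⁻¹
    rw [hfe] at this
    simpa only [inv_mul_cancel_left₀ hsc] using this)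
  have hmid' : ‖(∫ y in (-10)..10, f y) - √(α / (2 * π)) *
      ((rexp (2 * x) * √(π / x) * (1 - 1 / (2 * x)) : ℝ) : ℂ)‖ ≤
      √(α / (2 * π)) * (30 * rexp (x * (102 / 101)) + 160 * rexp x) := by
    rw [hfe, intervalIntegral.integral_const_mul, ← mul_sub, norm_mul, norm_real,
      Real.norm_eq_abs, abs_of_pos hsq0]
    gcongr
  rw [abs_of_nonneg (by linarith)] at hle hri
  generalize rexp (2 * x) * √(π / x) * (1 - 1 / (2 * x)) = m at *
  have e : (((Fintype.card (Nat.Partition n) : ℝ) - α / (2 * π) * (√(α / (2 * π)) * m) : ℝ) : ℂ) =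
      ((α / (2 * π) : ℝ) : ℂ) * ((∫ y in (-(π / α))..(-10), f y) +
        ((∫ y in (-10)..10, f y) - √(α / (2 * π)) * m) + ∫ y in (10)..(π / α), f y) := by
    push_cast
    rw [hcard]
    ring
  have hα0 : 0 < α / (2 * π) := by positivity
  rw [← Real.norm_eq_abs, ← norm_real, e, norm_mul, norm_real, Real.norm_eq_abs, abs_of_pos hα0]
  gcongr
  refine (norm_add₃_le).trans ?_
  have : √(α / (2 * π)) * (rexp (3 / 2 * x) * (9 * (π / α))) ≤
      √(α / (2 * π)) * (rexp (3 / 2 * x) * (18 * x)) := by gcongr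
  have : 0 < √(α / (2 * π)) * rexp (3 / 2 * x) := by positivity
  nlinarith

open Real in
/-- An asymptotic formula for the partition numbers with an explicit relative error. -/
theorem abs_card_partition_sub_le {n : ℕ} {x : ℝ} (hx40 : 40 ≤ x)
    (hx : x ^ 2 = π ^ 2 / 6 * (n - 1 / 24)) :
    |(Fintype.card (Nat.Partition n) : ℝ) -
      π ^ 2 / (24 * √12) * ((2 * x - 1) * rexp (2 * x) / x ^ 3)| ≤
      1 / (20 * x ^ 2) * (π ^ 2 / (24 * √12) * ((2 * x - 1) * rexp (2 * x) / x ^ 3)) := by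
  have hx0 : 0 < x := by linarith
  have hα : 0 < π ^ 2 / 6 / x := by positivity
  have h := norm_card_partition_sub_le (n := n) hα hx40 (by field_simp) (by
    rw [div_mul_eq_mul_div, ← hx]
    field_simp)
  have e : π ^ 2 / 6 / x / (2 * π) * (√(π ^ 2 / 6 / x / (2 * π)) *
      (rexp (2 * x) * √(π / x) * (1 - 1 / (2 * x)))) =
      π ^ 2 / (24 * √12) * ((2 * x - 1) * rexp (2 * x) / x ^ 3) := by
    have e1 : √(π ^ 2 / 6 / x / (2 * π)) * √(π / x) = π / (√12 * x) := by
      rw [← Real.sqrt_mul (by positivity)]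
      have : π ^ 2 / 6 / x / (2 * π) * (π / x) = (π / x) ^ 2 / 12 := by
        field_simp
        norm_num
      rw [this, Real.sqrt_div (by positivity), Real.sqrt_sq (by positivity)]
      field_simp
    calc _ = π ^ 2 / 6 / x / (2 * π) * ((√(π ^ 2 / 6 / x / (2 * π)) * √(π / x)) *
          (rexp (2 * x) * (1 - 1 / (2 * x)))) := by ring
      _ = _ := by
          rw [e1]
          field_simp
          ring
  rw [e] at h
  refine h.trans ?_
  rw [← e]
  calc _ ≤ π ^ 2 / 6 / x / (2 * π) * (√(π ^ 2 / 6 / x / (2 * π)) *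
        (1 / (20 * x ^ 2) * (rexp (2 * x) * √(π / x) * (1 - 1 / (2 * x))))) := by
        gcongr
        exact error_terms_le hx40
    _ = _ := by ring

theorem ratio_polynomial_lt {t k : ℝ} (ht : 0 < t) (ht' : t ≤ 1 / 40) (hk : 1.644 ≤ k)
    (hk' : k ≤ 1.645) :
    (1 + 0.836 * t ^ 2) * (1 + k * t + 1.38 * t ^ 2) * (1 + 0.05 * t ^ 2) <
      (1 + 2.466 * t ^ 2) * (1 - 0.05 * t ^ 2) * (1 + k * t - 0.036 * t ^ 2) := by
  have h0 : 0 < t ^ 2 := by positivity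
  have h2 : t ^ 2 ≤ 1 / 1600 := by nlinarith
  have hkt : k * t ≤ 0.042 := by nlinarith
  have hkt0 : 0 < k * t := by positivity
  have h1 : (1 + 0.836 * t ^ 2) * (1 + 0.05 * t ^ 2) ≤ 1 + 0.887 * t ^ 2 := by nlinarith
  have h3 : 1 + 2.41 * t ^ 2 ≤ (1 + 2.466 * t ^ 2) * (1 - 0.05 * t ^ 2) := by nlinarith
  have h4 : (1 + 0.887 * t ^ 2) * (1 + k * t + 1.38 * t ^ 2) ≤ 1 + k * t + 2.33 * t ^ 2 := by
    nlinarith [mul_le_mul_of_nonneg_left hkt h0.le]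
  have h5 : 1 + k * t + 2.36 * t ^ 2 ≤ (1 + 2.41 * t ^ 2) * (1 + k * t - 0.036 * t ^ 2) := by
    nlinarith [mul_pos hkt0 h0]
  have h6 : 0 ≤ 1 + k * t - 0.036 * t ^ 2 := by nlinarith
  calc _ = (1 + 0.836 * t ^ 2) * (1 + 0.05 * t ^ 2) * (1 + k * t + 1.38 * t ^ 2) := by ring
    _ ≤ (1 + 0.887 * t ^ 2) * (1 + k * t + 1.38 * t ^ 2) := by gcongr
    _ < (1 + 2.41 * t ^ 2) * (1 + k * t - 0.036 * t ^ 2) := by nlinarith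
    _ ≤ _ := by gcongr

set_option maxHeartbeats 1000000 in
-- many nonlinear arithmetic estimates in one declaration
open Real in
theorem main_term_lt {A x x' : ℝ} (hA : 1.6449 < A) (hA' : A < 1.645) (hx : 40 ≤ x)
    (hxx : x ≤ x') (h : x' ^ 2 = x ^ 2 + A) :
    (1 + 1 / (20 * x' ^ 2)) * ((2 * x' - 1) * rexp (2 * x') / x' ^ 3) <
      (1 - 1 / (20 * x ^ 2)) * ((2 * x - 1) * rexp (2 * x) / x ^ 3) *
        (1 + A / √(x' ^ 2 + A / 24)) := by
  have hx0 : 0 < x := by linarith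
  have hx0' : 0 < x' := by linarith
  obtain ⟨t, ht⟩ : ∃ t, t = 1 / x := ⟨_, rfl⟩
  obtain ⟨k, hk⟩ : ∃ k, k = 2 * x * (x' - x) := ⟨_, rfl⟩
  have htx : t * x = 1 := by rw [ht]; field_simp
  have ht0 : 0 < t := by rw [ht]; positivity
  have ht40 : t ≤ 1 / 40 := by rw [ht]; gcongr
  have hkA : k ≤ A := by nlinarith
  have hd : x' - x = k * t / 2 := by
    rw [hk]
    linear_combination -(x' - x) * htx
  have hAk : A = k + (x' - x) ^ 2 := by
    rw [hk]
    linear_combination -h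
  have hd0 : 0 ≤ x' - x := by linarith
  have hk1 : 1.644 ≤ k := by nlinarith
  have hx1 : x' = x * (1 + k * t ^ 2 / 2) := by
    linear_combination hd - k * t / 2 * htx
  have ht2 : 0 < t ^ 2 := by positivity
  have ht2' : t ^ 2 ≤ 1 / 1600 := by nlinarith
  have b1 : 2 * x' - 1 ≤ (2 * x - 1) * (1 + 0.836 * t ^ 2) := by
    have : (2 * x - 1) * (0.836 * t ^ 2) = 0.836 * t * (2 - t) := by
      linear_combination 0.836 * 2 * t * htx
    nlinarith
  have b2 : x ^ 3 * (1 + 2.466 * t ^ 2) ≤ x' ^ 3 := by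
    rw [hx1, mul_pow]
    gcongr
    have : 0 ≤ k * t ^ 2 / 2 := by positivity
    have h3 := one_add_mul_le_pow (a := k * t ^ 2 / 2) (by linarith) 3
    push_cast at h3
    nlinarith
  have b3 : rexp (2 * x') ≤ rexp (2 * x) * (1 + k * t + 1.38 * t ^ 2) := by
    have e : 2 * x' = 2 * x + k * t := by linear_combination 2 * hd
    rw [e, Real.exp_add]
    gcongr
    have hkt0 : 0 ≤ k * t := by positivity
    have hkt1 : k * t ≤ 1 := by nlinarith
    have h4 := Real.exp_bound' hkt0 hkt1 (n := 3) (by norm_num)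
    norm_num [Finset.sum_range_succ, Nat.factorial] at h4
    have h5 : k * t ≤ 0.0412 := by nlinarith
    have h6 : (k * t) ^ 2 ≤ 2.7061 * t ^ 2 := by
      rw [mul_pow]
      gcongr
      nlinarith
    have h7 : (k * t) ^ 3 ≤ 0.0412 * (2.7061 * t ^ 2) := by
      calc (k * t) ^ 3 = k * t * (k * t) ^ 2 := by ring
        _ ≤ _ := by gcongr
    nlinarith
  have b4 : 1 + 1 / (20 * x' ^ 2) ≤ 1 + 0.05 * t ^ 2 := by
    have : 1 / (20 * x' ^ 2) ≤ 1 / (20 * x ^ 2) := by gcongr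
    have e : 0.05 * t ^ 2 = 1 / (20 * x ^ 2) := by
      rw [ht]
      field_simp
      norm_num
    linarith
  have b5 : 1 + k * t - 0.036 * t ^ 2 ≤ 1 + A / √(x' ^ 2 + A / 24) := by
    have hS : √(x' ^ 2 + A / 24) ≤ x * (1 + 0.86 * t ^ 2) := by
      rw [Real.sqrt_le_left (by positivity)]
      have e : (x * (1 + 0.86 * t ^ 2)) ^ 2 = x ^ 2 + 1.72 + 0.86 ^ 2 * t ^ 2 := by
        linear_combination (1.72 * (t * x + 1) + 0.86 ^ 2 * t ^ 2 * (t * x + 1)) * htx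
      rw [e, h]
      nlinarith
    have hS0 : 0 < √(x' ^ 2 + A / 24) := Real.sqrt_pos.mpr (by positivity)
    have : k / (x * (1 + 0.86 * t ^ 2)) ≤ A / √(x' ^ 2 + A / 24) := by gcongr
    have h8 : k * t - 0.036 * t ^ 2 ≤ k / (x * (1 + 0.86 * t ^ 2)) := by
      rw [le_div_iff₀ (by positivity)]
      have e : (k * t - 0.036 * t ^ 2) * (x * (1 + 0.86 * t ^ 2)) =
          (k - 0.036 * t) * (1 + 0.86 * t ^ 2) := by
        linear_combination (k - 0.036 * t) * (1 + 0.86 * t ^ 2) * htx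
      rw [e]
      nlinarith [mul_pos ht0 ht2]
    linarith
  have b6 : 1 - 1 / (20 * x ^ 2) = 1 - 0.05 * t ^ 2 := by
    rw [ht]
    field_simp
    ring
  have hpoly := ratio_polynomial_lt ht0 ht40 hk1 (by linarith)
  rw [b6]
  have hX : 0 < (2 * x - 1) * rexp (2 * x) / x ^ 3 := by
    have : 0 < 2 * x - 1 := by linarith
    positivity
  calc _ ≤ (1 + 0.05 * t ^ 2) * (((2 * x - 1) * (1 + 0.836 * t ^ 2)) *
        (rexp (2 * x) * (1 + k * t + 1.38 * t ^ 2)) / (x ^ 3 * (1 + 2.466 * t ^ 2))) := by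
        have h9 : 0 ≤ 2 * x - 1 := by linarith
        have h10 : 0 ≤ 2 * x' - 1 := by linarith
        gcongr
    _ = (2 * x - 1) * rexp (2 * x) / x ^ 3 * (((1 + 0.836 * t ^ 2) *
        (1 + k * t + 1.38 * t ^ 2) * (1 + 0.05 * t ^ 2)) / (1 + 2.466 * t ^ 2)) := by
        field_simp
    _ < (2 * x - 1) * rexp (2 * x) / x ^ 3 * ((1 - 0.05 * t ^ 2) *
        (1 + k * t - 0.036 * t ^ 2)) := by
        gcongr
        rw [div_lt_iff₀ (by positivity)]
        linarith
    _ ≤ (2 * x - 1) * rexp (2 * x) / x ^ 3 * ((1 - 0.05 * t ^ 2) *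
        (1 + A / √(x' ^ 2 + A / 24))) := by
        have : 0 ≤ 1 - 0.05 * t ^ 2 := by linarith
        gcongr
    _ = _ := by ring

open Real in
theorem card_partition_succ_lt_of_le {n : ℕ} (hn : 1000 ≤ n) :
    (Fintype.card (Nat.Partition (n + 1)) : ℝ) < Fintype.card (Nat.Partition n) *
      (1 + √6 * π / 6 / √(n + 1)) := by
  have hn' : (1000 : ℝ) ≤ n := by exact_mod_cast hn
  have hA : 1.6449 < π ^ 2 / 6 := by nlinarith [Real.pi_gt_d6]
  have hA' : π ^ 2 / 6 < 1.645 := by nlinarith [Real.pi_lt_d6, Real.pi_pos]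
  obtain ⟨A, hAe⟩ : ∃ A, A = π ^ 2 / 6 := ⟨_, rfl⟩
  rw [← hAe] at hA hA'
  have hx2 : √(A * (n - 1 / 24)) ^ 2 = A * (n - 1 / 24) := Real.sq_sqrt (by nlinarith)
  have hx2' : √(A * (n + 1 - 1 / 24)) ^ 2 = A * (n + 1 - 1 / 24) := Real.sq_sqrt (by nlinarith)
  have hx : 40 ≤ √(A * (n - 1 / 24)) := Real.le_sqrt_of_sq_le (by nlinarith)
  have hxx : √(A * (n - 1 / 24)) ≤ √(A * (n + 1 - 1 / 24)) := Real.sqrt_le_sqrt (by nlinarith)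
  have h1 := abs_card_partition_sub_le (n := n) hx (by rw [hx2, hAe])
  have h2 := abs_card_partition_sub_le (n := n + 1) (hx.trans hxx) (by
    rw [hx2', hAe]
    push_cast
    ring)
  have h3 := main_term_lt hA hA' hx hxx (by rw [hx2, hx2']; ring)
  have hS : A / √(√(A * (n + 1 - 1 / 24)) ^ 2 + A / 24) = √6 * π / 6 / √(n + 1) := by
    rw [hx2', show A * (n + 1 - 1 / 24) + A / 24 = A * (n + 1 : ℝ) by ring,
      Real.sqrt_mul (by linarith), ← div_div, Real.div_sqrt, hAe, Real.sqrt_div (by positivity),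
      Real.sqrt_sq Real.pi_pos.le]
    congr 1
    rw [div_eq_div_iff (by positivity) (by norm_num)]
    have : √6 * √6 = 6 := Real.mul_self_sqrt (by norm_num)
    linear_combination -π * this
  rw [hS] at h3
  generalize √(A * (n - 1 / 24)) = x at *
  generalize √(A * (n + 1 - 1 / 24)) = x' at *
  have hC : 0 < π ^ 2 / (24 * √12) := by positivity
  generalize π ^ 2 / (24 * √12) = C at *
  generalize (2 * x - 1) * rexp (2 * x) / x ^ 3 = X at *
  generalize (2 * x' - 1) * rexp (2 * x') / x' ^ 3 = X' at *
  have hc : 0 < 1 + √6 * π / 6 / √(n + 1) := by positivity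
  rw [abs_le] at h1 h2
  calc (Fintype.card (Nat.Partition (n + 1)) : ℝ) ≤ C * ((1 + 1 / (20 * x' ^ 2)) * X') := by
        linarith [h2.2]
    _ < C * ((1 - 1 / (20 * x ^ 2)) * X * (1 + √6 * π / 6 / √(n + 1))) := by gcongr
    _ = (1 - 1 / (20 * x ^ 2)) * (C * X) * (1 + √6 * π / 6 / √(n + 1)) := by ring
    _ ≤ _ := by
        gcongr
        linarith [h1.1]

theorem card_partition_le_succ (n : ℕ) :
    Fintype.card (Nat.Partition n) ≤ Fintype.card (Nat.Partition (n + 1)) := by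
  let f : Nat.Partition n → Nat.Partition (n + 1) := fun c ↦
    { parts := 1 ::ₘ c.parts
      parts_pos := by
        intro i hi
        rcases Multiset.mem_cons.mp hi with rfl | hi
        · exact one_pos
        · exact c.parts_pos hi
      parts_sum := by rw [Multiset.sum_cons, c.parts_sum, add_comm] }
  refine Fintype.card_le_of_injective f fun a b hab ↦ Nat.Partition.ext ?_
  exact (Multiset.cons_inj_right 1).mp (congrArg Nat.Partition.parts hab)

open Real in
theorem card_partition_lt_two_pow {n : ℕ} (hn : n ≤ 1001) :
    Fintype.card (Nat.Partition n) < 2 ^ 160 := by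
  refine (monotone_nat_of_le_succ card_partition_le_succ hn).trans_lt ?_
  have hA : 1.6449 < π ^ 2 / 6 := by nlinarith [Real.pi_gt_d6]
  have hA' : π ^ 2 / 6 < 1.645 := by nlinarith [Real.pi_lt_d6, Real.pi_pos]
  have hx2 : √(π ^ 2 / 6 * (1001 - 1 / 24)) ^ 2 = π ^ 2 / 6 * (1001 - 1 / 24) :=
    Real.sq_sqrt (by nlinarith)
  have hx : 40 ≤ √(π ^ 2 / 6 * (1001 - 1 / 24)) := Real.le_sqrt_of_sq_le (by nlinarith)
  have hx' : √(π ^ 2 / 6 * (1001 - 1 / 24)) ≤ 41 := Real.sqrt_le_iff.mpr ⟨by norm_num, by nlinarith⟩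
  have h := (abs_le.mp (abs_card_partition_sub_le (n := 1001) hx (by rw [hx2]; norm_num))).2
  generalize √(π ^ 2 / 6 * (1001 - 1 / 24)) = x at *
  have hx0 : 0 < x := by linarith
  have hC : π ^ 2 / (24 * √12) ≤ 1 := by
    have : 1 ≤ √12 := Real.one_le_sqrt.mpr (by norm_num)
    rw [div_le_one (by positivity)]
    nlinarith
  have hC0 : 0 ≤ π ^ 2 / (24 * √12) := by positivity
  have hE : rexp (2 * x) ≤ 2 ^ 158 := by
    calc rexp (2 * x) ≤ rexp 82 := Real.exp_le_exp.mpr (by linarith)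
      _ = rexp 1 ^ 82 := by rw [← Real.exp_nat_mul]; norm_num
      _ ≤ 3 ^ 82 := by gcongr; linarith [Real.exp_one_lt_d9]
      _ ≤ 2 ^ 158 := by norm_num
  have hX : (2 * x - 1) * rexp (2 * x) / x ^ 3 ≤ 2 ^ 158 := by
    rw [div_le_iff₀ (by positivity), mul_comm]
    have h3 : 2 * x - 1 ≤ x ^ 3 := by nlinarith [mul_pos hx0 hx0]
    gcongr
    linarith
  have hX0 : 0 ≤ (2 * x - 1) * rexp (2 * x) / x ^ 3 := by
    have : 0 ≤ 2 * x - 1 := by linarith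
    positivity
  generalize (2 * x - 1) * rexp (2 * x) / x ^ 3 = X at *
  generalize π ^ 2 / (24 * √12) = C at *
  have hCX : C * X ≤ 2 ^ 158 := by nlinarith
  have hCX0 : 0 ≤ C * X := by positivity
  have hr : 1 / (20 * x ^ 2) ≤ 1 := by
    rw [div_le_one (by positivity)]
    nlinarith
  have : (Fintype.card (Nat.Partition 1001) : ℝ) < 2 ^ 160 := by nlinarith
  exact_mod_cast this

theorem sum_range_two_mul {M : Type*} [AddCommMonoid M] (f : ℕ → M) (m : ℕ) :
    ∑ k ∈ Finset.range (2 * m), f k = ∑ i ∈ Finset.range m, (f (2 * i) + f (2 * i + 1)) := by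
  induction m with
  | zero => simp
  | succ m ih =>
    rw [Nat.mul_succ, Finset.sum_range_succ, Finset.sum_range_succ, ih, Finset.sum_range_succ,
      add_assoc]

/-- The positive terms among the first `4 * m` terms of the pentagonal series. -/
def pentagonalPos {R : Type*} [Semiring R] (x : R) (m : ℕ) : R :=
  ∑ i ∈ Finset.range m, (x ^ (i * (6 * i + 1)) + x ^ ((i + 1) * (6 * i + 5)))

/-- The negative terms among the first `4 * m` terms of the pentagonal series. -/
def pentagonalNeg {R : Type*} [Semiring R] (x : R) (m : ℕ) : R :=
  ∑ i ∈ Finset.range m, (x ^ ((2 * i + 1) * (3 * i + 1)) + x ^ ((2 * i + 1) * (3 * i + 2)))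

theorem map_pentagonalPos {R S : Type*} [Semiring R] [Semiring S] (f : R →+* S) (x : R) (m : ℕ) :
    f (pentagonalPos x m) = pentagonalPos (f x) m := by
  simp [pentagonalPos]

theorem map_pentagonalNeg {R S : Type*} [Semiring R] [Semiring S] (f : R →+* S) (x : R) (m : ℕ) :
    f (pentagonalNeg x m) = pentagonalNeg (f x) m := by
  simp [pentagonalNeg]

theorem sum_range_pentagonal {R : Type*} [CommRing R] (x : R) (m : ℕ) :
    ∑ k ∈ Finset.range (2 * m), (-1) ^ k * (x ^ pentagonal (-k) - x ^ pentagonal (k + 1)) =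
      pentagonalPos x m - pentagonalNeg x m := by
  rw [sum_range_two_mul, pentagonalPos, pentagonalNeg, ← Finset.sum_sub_distrib]
  refine Finset.sum_congr rfl fun i _ ↦ ?_
  have h1 : pentagonal (-(2 * i : ℕ)) = i * (6 * i + 1) := by
    have := two_mul_natCast_pentagonal_neg (2 * i : ℕ)
    zify
    push_cast at this ⊢
    linarith
  have h2 : pentagonal ((2 * i : ℕ) + 1) = (2 * i + 1) * (3 * i + 1) := by
    have := two_mul_natCast_pentagonal ((2 * i : ℕ) + 1)
    zify
    push_cast at this ⊢
    linarith
  have h3 : pentagonal (-(2 * i + 1 : ℕ)) = (2 * i + 1) * (3 * i + 2) := by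
    have := two_mul_natCast_pentagonal_neg (2 * i + 1 : ℕ)
    zify
    push_cast at this ⊢
    linarith
  have h4 : pentagonal ((2 * i + 1 : ℕ) + 1) = (i + 1) * (6 * i + 5) := by
    have := two_mul_natCast_pentagonal ((2 * i + 1 : ℕ) + 1)
    zify
    push_cast at this ⊢
    linarith
  rw [h1, h2, h3, h4, pow_succ, pow_mul]
  ring

open PowerSeries PowerSeries.WithPiTopology in
theorem X_pow_dvd_pentagonalSeries_sub {N m : ℕ} (hN : N ≤ m * (6 * m + 1)) :
    (X : ℤ⟦X⟧) ^ N ∣ pentagonalSeries ℤ - (pentagonalPos X m - pentagonalNeg X m) := by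
  rw [← sum_range_pentagonal, X_pow_dvd_iff]
  intro d hd
  have h := (hasSum_pow_pentagonal_sub_pentagonalSeries ℤ).map (coeff (R := ℤ) d)
    (continuous_coeff ℤ d)
  have h' := hasSum_sum_of_ne_finset_zero (L := .unconditional _) (s := Finset.range (2 * m))
    (f := coeff (R := ℤ) d ∘ fun k : ℕ ↦
      (-1) ^ k * ((X : ℤ⟦X⟧) ^ pentagonal (-k) - X ^ pentagonal (k + 1))) (by
      intro k hk
      have hk : (2 * m : ℤ) ≤ k := by
        have := Finset.mem_range.not.mp hk
        push Not at this
        exact_mod_cast this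
      have h1 := two_mul_natCast_pentagonal_neg k
      have h2 := two_mul_natCast_pentagonal (k + 1)
      zify at hd hN
      have e1 : d ≠ pentagonal (-k) := by
        zify
        nlinarith
      have e2 : d ≠ pentagonal (k + 1) := by
        zify
        nlinarith
      have e : ((-1) ^ k : ℤ⟦X⟧) = C ((-1) ^ k : ℤ) := by simp
      rw [Function.comp_apply, e, coeff_C_mul, map_sub, coeff_X_pow, coeff_X_pow, if_neg e1,
        if_neg e2, sub_zero, mul_zero])
  rw [map_sub, h.unique h', map_sum, sub_eq_zero]
  rfl

open PowerSeries in
theorem pow_dvd_sum_card_partition_mul (B : ℤ) {N m : ℕ} (hN : N ≤ m * (6 * m + 1)) :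
    B ^ N ∣ (∑ k ∈ Finset.range N, (Fintype.card (Nat.Partition k) : ℤ) * B ^ k) *
      (pentagonalPos B m - pentagonalNeg B m) - 1 := by
  obtain ⟨F, hF⟩ : ∃ F : ℤ⟦X⟧, F = .mk fun n ↦ (Fintype.card (Nat.Partition n) : ℤ) := ⟨_, rfl⟩
  have hF1 : F * pentagonalSeries ℤ = 1 := hF ▸ mk_card_partition_mul_pentagonalSeries
  have hT : (X : ℤ⟦X⟧) ^ N ∣ F - (trunc N F : Polynomial ℤ) := by
    rw [X_pow_dvd_iff]
    intro d hd
    simp [coeff_trunc, hd]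
  have hcoe : ((pentagonalPos Polynomial.X m - pentagonalNeg Polynomial.X m : Polynomial ℤ) : ℤ⟦X⟧)
      = pentagonalPos X m - pentagonalNeg X m := by
    have h1 := map_pentagonalPos (Polynomial.coeToPowerSeries.ringHom (R := ℤ)) Polynomial.X m
    have h2 := map_pentagonalNeg (Polynomial.coeToPowerSeries.ringHom (R := ℤ)) Polynomial.X m
    simp only [Polynomial.coeToPowerSeries.ringHom_apply, Polynomial.coe_X] at h1 h2
    rw [Polynomial.coe_sub, h1, h2]
  have hdvd : (Polynomial.X : Polynomial ℤ) ^ N ∣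
      trunc N F * (pentagonalPos Polynomial.X m - pentagonalNeg Polynomial.X m) - 1 := by
    have h : (X : ℤ⟦X⟧) ^ N ∣ ((trunc N F *
        (pentagonalPos Polynomial.X m - pentagonalNeg Polynomial.X m) - 1 : Polynomial ℤ) :
          ℤ⟦X⟧) := by
      rw [Polynomial.coe_sub, Polynomial.coe_mul, hcoe, Polynomial.coe_one, ← hF1]
      have := (hT.mul_right (pentagonalPos X m - pentagonalNeg X m)).add
        ((X_pow_dvd_pentagonalSeries_sub hN).mul_left F)
      rw [← dvd_neg]
      convert this using 1
      ring
    rw [Polynomial.X_pow_dvd_iff]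
    intro d hd
    rw [← Polynomial.coeff_coe]
    exact X_pow_dvd_iff.mp h d hd
  have h := map_dvd (Polynomial.evalRingHom B) hdvd
  rw [map_sub, map_mul, map_sub, map_pentagonalPos, map_pentagonalNeg, map_pow] at h
  simpa [trunc_apply, Polynomial.eval_finsetSum, hF] using h

theorem sum_mul_pow_lt {B : ℕ} {a : ℕ → ℕ} {N : ℕ} (ha : ∀ k < N, a k < B) :
    ∑ k ∈ Finset.range N, a k * B ^ k < B ^ N := by
  induction N with
  | zero => simp
  | succ N ih =>
    rw [Finset.sum_range_succ, pow_succ']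
    have h1 := ih fun k hk ↦ ha k (by omega)
    have h2 : (a N + 1) * B ^ N ≤ B * B ^ N := Nat.mul_le_mul_right _ (ha N (by omega))
    linarith

theorem sum_mul_pow_div_pow_mod {B : ℕ} {a : ℕ → ℕ} {N n : ℕ} (ha : ∀ k < N, a k < B)
    (hn : n < N) : (∑ k ∈ Finset.range N, a k * B ^ k) / B ^ n % B = a n := by
  have hB : 0 < B := (Nat.zero_le _).trans_lt (ha n hn)
  obtain ⟨r, rfl⟩ := Nat.exists_eq_add_of_lt hn
  have h : ∑ k ∈ Finset.range (n + r + 1), a k * B ^ k = ∑ k ∈ Finset.range n, a k * B ^ k +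
      B ^ n * (a n + B * ∑ k ∈ Finset.range r, a (n + 1 + k) * B ^ k) := by
    rw [show n + r + 1 = n + 1 + r by ring, Finset.sum_range_add, Finset.sum_range_succ,
      Finset.mul_sum, mul_add, add_assoc, Finset.mul_sum]
    congr 2
    · ring
    · exact Finset.sum_congr rfl fun k _ ↦ by ring
  rw [h, Nat.add_mul_div_left _ _ (by positivity),
    Nat.div_eq_of_lt (sum_mul_pow_lt fun k hk ↦ ha k (by omega)), zero_add,
    Nat.add_mul_mod_self_left, Nat.mod_eq_of_lt (ha n hn)]

/-- Newton iteration for the inverse of the truncated pentagonal series at `B`, modulo `B ^ N`. -/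
def pentagonalInverse (B N m : ℕ) : ℕ → ℕ
  | 0 => 1
  | k + 1 => pentagonalInverse B N m k * (2 + pentagonalInverse B N m k * pentagonalNeg B m % B ^ N
      + B ^ N - pentagonalInverse B N m k * pentagonalPos B m % B ^ N) % B ^ N

theorem sum_card_partition_mul_pow_eq {B N m S : ℕ} (hN : N ≤ m * (6 * m + 1)) (hS : S < B ^ N)
    (hB : ∀ k < N, Fintype.card (Nat.Partition k) < B)
    (h : S * pentagonalPos B m % B ^ N = (1 + S * pentagonalNeg B m) % B ^ N) :
    ∑ k ∈ Finset.range N, Fintype.card (Nat.Partition k) * B ^ k = S := by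
  have h1 := pow_dvd_sum_card_partition_mul B hN
  have h2 := (Nat.modEq_iff_dvd.mp h)
  have hp := map_pentagonalPos (Nat.castRingHom ℤ) B m
  have hq := map_pentagonalNeg (Nat.castRingHom ℤ) B m
  simp only [Nat.coe_castRingHom] at hp hq
  push_cast [hp, hq] at h2
  refine Nat.ModEq.eq_of_lt_of_lt (m := B ^ N) ?_ (sum_mul_pow_lt hB) hS
  rw [Nat.modEq_iff_dvd]
  push_cast
  have := (h1.mul_left (S : ℤ)).add (h2.mul_left
    (∑ k ∈ Finset.range N, (Fintype.card (Nat.Partition k) : ℤ) * (B : ℤ) ^ k))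
  rw [← dvd_neg]
  convert this using 1
  ring

theorem pentagonalInverse_mul_pentagonalPos_mod :
    pentagonalInverse (2 ^ 160) 1002 13 10 * pentagonalPos (2 ^ 160) 13 % (2 ^ 160) ^ 1002 =
      (1 + pentagonalInverse (2 ^ 160) 1002 13 10 * pentagonalNeg (2 ^ 160) 13) %
        (2 ^ 160) ^ 1002 := by
  decide +kernel

theorem pentagonalInverse_digits_lt : ∀ n < 1000, 12 ≤ n →
    60000 * (n + 1) * (pentagonalInverse (2 ^ 160) 1002 13 10 / (2 ^ 160) ^ (n + 1) % 2 ^ 160 -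
      pentagonalInverse (2 ^ 160) 1002 13 10 / (2 ^ 160) ^ n % 2 ^ 160) ^ 2 <
    98696 * (pentagonalInverse (2 ^ 160) 1002 13 10 / (2 ^ 160) ^ n % 2 ^ 160) ^ 2 := by
  decide +kernel

theorem card_partition_sub_sq_lt {n : ℕ} (hn : 12 ≤ n) (hn' : n < 1000) :
    60000 * (n + 1) * (Fintype.card (Nat.Partition (n + 1)) -
      Fintype.card (Nat.Partition n)) ^ 2 < 98696 * Fintype.card (Nat.Partition n) ^ 2 := by
  have hB : ∀ k < 1002, Fintype.card (Nat.Partition k) < 2 ^ 160 := fun k hk ↦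
    card_partition_lt_two_pow (by omega)
  have h := sum_card_partition_mul_pow_eq (N := 1002) (m := 13)
    (S := pentagonalInverse (2 ^ 160) 1002 13 10) (by norm_num) (Nat.mod_lt _ (by positivity)) hB
    pentagonalInverse_mul_pentagonalPos_mod
  have h1 := sum_mul_pow_div_pow_mod hB (n := n) (by omega)
  have h2 := sum_mul_pow_div_pow_mod hB (n := n + 1) (by omega)
  have h3 := pentagonalInverse_digits_lt n hn' hn
  rwa [← h, h1, h2] at h3

open Real in
theorem card_partition_succ_lt_of_lt {n : ℕ} (hn : 12 ≤ n) (hn' : n < 1000) :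
    (Fintype.card (Nat.Partition (n + 1)) : ℝ) < Fintype.card (Nat.Partition n) *
      (1 + √6 * π / 6 / √(n + 1)) := by
  have h := card_partition_sub_sq_lt hn hn'
  obtain ⟨d, hd⟩ := Nat.exists_eq_add_of_le (card_partition_le_succ n)
  rw [hd, Nat.add_sub_cancel_left] at h
  rw [hd]
  generalize Fintype.card (Nat.Partition n) = a at *
  have h' : (60000 * (n + 1) * d ^ 2 : ℝ) < 98696 * a ^ 2 := by exact_mod_cast h
  have hpi : 9.8696 ≤ π ^ 2 := by nlinarith [Real.pi_gt_d6]
  have hs : √((n : ℝ) + 1) ^ 2 = n + 1 := Real.sq_sqrt (by positivity)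
  have h6 : √6 ^ 2 = 6 := Real.sq_sqrt (by norm_num)
  have hs0 : 0 < √((n : ℝ) + 1) := Real.sqrt_pos.mpr (by positivity)
  have hlt : d * √((n : ℝ) + 1) < a * (√6 * π / 6) := by
    refine lt_of_pow_lt_pow_left₀ 2 (by positivity) ?_
    have e1 : (d * √((n : ℝ) + 1)) ^ 2 = (n + 1) * d ^ 2 := by rw [mul_pow, hs, mul_comm]
    have e2 : (a * (√6 * π / 6)) ^ 2 = a ^ 2 * π ^ 2 / 6 := by
      linear_combination (a ^ 2 * π ^ 2 / 36) * h6
    rw [e1, e2]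
    nlinarith [mul_le_mul_of_nonneg_left hpi (sq_nonneg (a : ℝ))]
  have : (d : ℝ) < a * (√6 * π / 6) / √(n + 1) := (lt_div_iff₀ hs0).mpr hlt
  push_cast
  rw [mul_add, mul_one, ← mul_div_assoc]
  linarith

open Real in
theorem stmt_17 (p : ℕ → ℕ) (hp : ∀ n, p n = Fintype.card (Nat.Partition n))
    (n : ℕ) (hn : 12 ≤ n) :
    Real.log (p (n + 1)) - Real.log (p n) <
      Real.log (1 + (Real.sqrt 6 * π / 6) / ((n : ℝ) + 1) ^ ((1:ℝ)/2)) := by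
  have hpos (k : ℕ) : (0 : ℝ) < Fintype.card (Nat.Partition k) := by
    exact_mod_cast Fintype.card_pos
  have h : (Fintype.card (Nat.Partition (n + 1)) : ℝ) < Fintype.card (Nat.Partition n) *
      (1 + √6 * π / 6 / √(n + 1)) := by
    rcases lt_or_ge n 1000 with h | h
    · exact card_partition_succ_lt_of_lt hn h
    · exact card_partition_succ_lt_of_le h
  rw [hp, hp, ← Real.sqrt_eq_rpow, ← Real.log_div (hpos _).ne' (hpos _).ne']
  exact Real.log_lt_log (div_pos (hpos _) (hpos _)) ((div_lt_iff₀' (hpos _)).mpr h)
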